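/- Let X = (X_t)_{t≥0} be a real-valued additive process (X_0 = 0, independent increments, continuous in probability, cadlag paths) with E[X_t] = 0 and E[|X_t|^n] < ∞ for all n ≥ 1 and t ≥ 0. For n ≥ 3, let Y^(n)_t = Σ_{0<s≤t} (ΔX_s)^n − F_n(t) be the n-th Teugels martingale of X. Then the predictable quadratic variation of Y^(n) is ⟨Y^(n)⟩_t = F_{2n}(t); equivalently, the process (Y^(n)_t)^2 − F_{2n}(t) is a martingale with respect to the natural filtration of X. -/

import Mathlib

open MeasureTheory ProbabilityTheory Filter Topology
open scoped NNReal

/-- The Kendall polynomials `Γ_n`, expressing moments in terms of cumulants: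
`Γ_0 = 1` and `Γ_{n+1}(x_1,…,x_{n+1}) = Σ_{j=0}^n C(n,j) Γ_j(x_1,…,x_j) x_{n+1-j}`.
The argument function `x : ℕ → ℝ` encodes the variables `x_1, x_2, …`
(only the values `x 1, …, x n` are used by `kendall n x`). -/
noncomputable def kendall : ℕ → (ℕ → ℝ) → ℝ
  | 0, _ => 1
  | n + 1, x =>
      ∑ j ∈ (Finset.range (n + 1)).attach,
        (n.choose j.1 : ℝ) * kendall j.1 x * x (n + 1 - j.1)
decreasing_by exact Finset.mem_range.mp j.2

/-- A function `f : ℝ≥0 → ℝ` is cadlag: right-continuous with left limits. -/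
def IsCadlag (f : ℝ≥0 → ℝ) : Prop :=
  (∀ t : ℝ≥0, ContinuousWithinAt f (Set.Ici t) t) ∧
    ∀ t : ℝ≥0, 0 < t → ∃ l : ℝ, Tendsto f (𝓝[<] t) (𝓝 l)

/-- The `n`-th variation process `X^{(n)}_t(ω) = Σ_{0<s≤t} (ΔX_s(ω))^n`, where
`ΔX_s = X_s - X_{s-}` and `X_{s-}` is the left limit of the path at `s`. Since a cadlag path
has at most countably many jumps, the unconditional sum `∑'` over all `s ∈ (0, t]` reduces to
the countable sum of the `n`-th powers of the jumps in `(0, t]`. -/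
noncomputable def variationProc {Ω : Type*} (X : ℝ≥0 → Ω → ℝ) (n : ℕ) (t : ℝ≥0) (ω : Ω) :
    ℝ :=
  ∑' s : ℝ≥0, Set.indicator (Set.Ioc 0 t)
    (fun u => (X u ω - Function.leftLim (fun r => X r ω) u) ^ n) s

/-!
Cut `(s, t]` into `N + 1` equal intervals and let `D k` be the increment of `X` over the `k`-th one.
Since cumulants of independent variables add, the moment–cumulant relations give
`∑ k, E[D k ^ n] → Fₙ(t) - Fₙ(s)`, every other term being a product of a small cumulant and a
summable moment. Pathwise `∑ k, D k ^ n` tends to the sum of the `n`-th powers of the jumps in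
`(s, t]`; as all moments of `∑ k, |D k| ^ j` with `j ≥ 2` are bounded in `N`, the convergence also
holds in mean square. The compensated sum `∑ k, (D k ^ n - E[D k ^ n])` therefore tends in `L²` to
`Y_t - Y_s`. Its summands are martingale differences, so that for `A ∈ ℱ s`
`E[1_A (∑ k, (D k ^ n - E[D k ^ n]))²] = P(A) ∑ k, (E[D k ^ (2 n)] - E[D k ^ n]²)`,
and the right-hand side tends to `P(A) (F₂ₙ(t) - F₂ₙ(s))`.
-/

/-! ### Random variables with finite moments of all orders -/

/-- The real random variable `Z` has finite moments of all orders, i.e. it lies in `Lᵖ` for every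
`p < ∞`. -/
def HasAllMoments {Ω : Type*} {_ : MeasurableSpace Ω} (Z : Ω → ℝ) (μ : Measure Ω) : Prop :=
  ∀ p : ENNReal, p ≠ ⊤ → MemLp Z p μ

namespace HasAllMoments

variable {Ω : Type*} {mΩ : MeasurableSpace Ω} {μ : Measure Ω} {Z W : Ω → ℝ}

lemma memLp_two (hZ : HasAllMoments Z μ) : MemLp Z 2 μ := hZ 2 (by simp)

lemma integrable (hZ : HasAllMoments Z μ) : Integrable Z μ :=
  memLp_one_iff_integrable.1 (hZ 1 (by simp))

lemma aestronglyMeasurable (hZ : HasAllMoments Z μ) : AEStronglyMeasurable Z μ :=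
  hZ.integrable.aestronglyMeasurable

lemma of_le (hW : HasAllMoments W μ) (hZ : AEStronglyMeasurable Z μ) (h : ∀ ω, |Z ω| ≤ |W ω|) :
    HasAllMoments Z μ :=
  fun p hp => (hW p hp).mono hZ (.of_forall h)

lemma add (hZ : HasAllMoments Z μ) (hW : HasAllMoments W μ) :
    HasAllMoments (fun ω => Z ω + W ω) μ :=
  fun p hp => (hZ p hp).add (hW p hp)

lemma sub (hZ : HasAllMoments Z μ) (hW : HasAllMoments W μ) :
    HasAllMoments (fun ω => Z ω - W ω) μ :=
  fun p hp => (hZ p hp).sub (hW p hp)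

lemma abs (hZ : HasAllMoments Z μ) : HasAllMoments (fun ω => |Z ω|) μ :=
  fun p hp => (hZ p hp).abs

lemma mul (hZ : HasAllMoments Z μ) (hW : HasAllMoments W μ) :
    HasAllMoments (fun ω => Z ω * W ω) μ := fun p hp => by
  have : ENNReal.HolderTriple (2 * p) (2 * p) p := ⟨by
    rw [ENNReal.mul_inv (by simp) (by simp), ← add_mul, ENNReal.inv_two_add_inv_two, one_mul]⟩
  exact (hW (2 * p) (by finiteness)).mul' (hZ (2 * p) (by finiteness))

lemma sum {ι : Type*} {Z : ι → Ω → ℝ} (S : Finset ι) (hZ : ∀ i ∈ S, HasAllMoments (Z i) μ) :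
    HasAllMoments (fun ω => ∑ i ∈ S, Z i ω) μ :=
  fun p hp => memLp_finsetSum S fun i hi => hZ i hi p hp

lemma indicator (hZ : HasAllMoments Z μ) {A : Set Ω} (hA : MeasurableSet A) :
    HasAllMoments (A.indicator Z) μ :=
  fun p hp => (hZ p hp).indicator hA

variable [IsFiniteMeasure μ]

lemma const (c : ℝ) : HasAllMoments (fun _ => c) μ := fun _ _ => memLp_const c

lemma prod {ι : Type*} {Z : ι → Ω → ℝ} (S : Finset ι) (hZ : ∀ i ∈ S, HasAllMoments (Z i) μ) :
    HasAllMoments (fun ω => ∏ i ∈ S, Z i ω) μ := by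
  classical
  induction S using Finset.induction_on with
  | empty => simpa using const 1
  | insert a S ha ih =>
    simp only [Finset.prod_insert ha]
    exact (hZ a (S.mem_insert_self a)).mul (ih fun i hi => hZ i (Finset.mem_insert_of_mem hi))

lemma sub_const (hZ : HasAllMoments Z μ) (c : ℝ) : HasAllMoments (fun ω => Z ω - c) μ :=
  hZ.sub (const c)

lemma pow (hZ : HasAllMoments Z μ) (n : ℕ) : HasAllMoments (fun ω => Z ω ^ n) μ := by
  induction n with
  | zero => simpa using const 1
  | succ n ih => simpa only [pow_succ] using ih.mul hZ

lemma of_integrable_abs_pow (hZ : AEStronglyMeasurable Z μ)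
    (h : ∀ n : ℕ, Integrable (fun ω => |Z ω| ^ n) μ) : HasAllMoments Z μ := fun p hp => by
  obtain ⟨n, hn⟩ := ENNReal.exists_nat_gt hp
  refine MemLp.mono_exponent (q := n) ?_ hn.le
  exact (integrable_norm_rpow_iff hZ hn.ne_bot (by simp)).1 (by simpa using h n)

end HasAllMoments

section CauchySchwarz

variable {Ω : Type*} {mΩ : MeasurableSpace Ω} {μ : Measure Ω}

lemma integral_abs_mul_le_sqrt_mul_sqrt {Z W : Ω → ℝ} (hZ : MemLp Z 2 μ) (hW : MemLp W 2 μ) :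
    ∫ ω, |Z ω * W ω| ∂μ ≤ √(∫ ω, Z ω ^ 2 ∂μ) * √(∫ ω, W ω ^ 2 ∂μ) := by
  have h := integral_mul_le_Lp_mul_Lq_of_nonneg Real.HolderConjugate.two_two
    (.of_forall fun ω => abs_nonneg (Z ω)) (.of_forall fun ω => abs_nonneg (W ω))
    (by rw [ENNReal.ofReal_ofNat]; exact hZ.abs) (by rw [ENNReal.ofReal_ofNat]; exact hW.abs)
  simpa [Real.sqrt_eq_rpow, abs_mul] using h

end CauchySchwarz

/-! ### Kendall polynomials and cumulants -/

lemma kendall_zero (x : ℕ → ℝ) : kendall 0 x = 1 := by rw [kendall]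

lemma kendall_succ (n : ℕ) (x : ℕ → ℝ) : kendall (n + 1) x =
    ∑ j ∈ Finset.range (n + 1), (n.choose j : ℝ) * kendall j x * x (n + 1 - j) := by
  rw [kendall]
  exact Finset.sum_attach (Finset.range (n + 1))
    (fun j => (n.choose j : ℝ) * kendall j x * x (n + 1 - j))

/-- The exponential generating function `∑ aₙ zⁿ / n!`. -/
noncomputable def egf (a : ℕ → ℝ) : PowerSeries ℝ := PowerSeries.mk fun n => a n / n.factorial

lemma coeff_egf (a : ℕ → ℝ) (n : ℕ) : PowerSeries.coeff n (egf a) = a n / n.factorial :=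
  PowerSeries.coeff_mk n _

lemma egf_injective : Function.Injective egf := fun a b h => funext fun n => by
  have := congrArg (PowerSeries.coeff n) h
  rwa [coeff_egf, coeff_egf, div_left_inj' (by positivity)] at this

lemma egf_add (a b : ℕ → ℝ) : egf (fun n => a n + b n) = egf a + egf b := by
  ext n
  simp only [map_add, coeff_egf, add_div]

lemma egf_mul (a b : ℕ → ℝ) : egf a * egf b =
    egf fun n => ∑ j ∈ Finset.range (n + 1), (n.choose j : ℝ) * a j * b (n - j) := by
  ext n
  rw [PowerSeries.coeff_mul, Finset.Nat.sum_antidiagonal_eq_sum_range_succ_mk, coeff_egf,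
    Finset.sum_div]
  refine Finset.sum_congr rfl fun j hj => ?_
  rw [coeff_egf, coeff_egf, Nat.cast_choose ℝ (Finset.mem_range_succ_iff.1 hj)]
  field_simp

lemma derivative_egf (a : ℕ → ℝ) :
    PowerSeries.derivative ℝ (egf a) = egf (fun n => a (n + 1)) := by
  ext n
  rw [PowerSeries.coeff_derivative, coeff_egf, coeff_egf, Nat.factorial_succ]
  push_cast
  field_simp

lemma derivative_egf_kendall (x : ℕ → ℝ) :
    PowerSeries.derivative ℝ (egf (kendall · x)) =
      egf (kendall · x) * egf (fun n => x (n + 1)) := by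
  rw [derivative_egf, egf_mul]
  congr 1 with n
  rw [kendall_succ]
  refine Finset.sum_congr rfl fun j hj => ?_
  rw [Nat.sub_add_comm (Finset.mem_range_succ_iff.1 hj)]

lemma eq_of_derivative_eq_mul {f g h : PowerSeries ℝ}
    (hf : PowerSeries.derivative ℝ f = f * h) (hg : PowerSeries.derivative ℝ g = g * h)
    (hfg : PowerSeries.constantCoeff f = PowerSeries.constantCoeff g)
    (hg0 : PowerSeries.constantCoeff g ≠ 0) : f = g := by
  have hgg : g * g⁻¹ = 1 := PowerSeries.mul_inv_cancel g hg0
  have hconst : f * g⁻¹ = 1 := by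
    refine PowerSeries.derivative.ext ?_ ?_
    · rw [Derivation.leibniz, PowerSeries.derivative_inv', hf, hg, Derivation.map_one_eq_zero]
      simp only [smul_eq_mul]
      linear_combination (-f * h * g⁻¹) * hgg
    · rw [map_mul, hfg, ← map_mul, hgg]
  calc f = f * g⁻¹ * g := by rw [mul_assoc, mul_comm g⁻¹, hgg, mul_one]
    _ = g := by rw [hconst, one_mul]

lemma constantCoeff_egf_kendall (x : ℕ → ℝ) :
    PowerSeries.constantCoeff (egf (kendall · x)) = 1 := by
  rw [← PowerSeries.coeff_zero_eq_constantCoeff_apply, coeff_egf, kendall_zero]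
  simp

lemma egf_kendall_add (x y : ℕ → ℝ) :
    egf (kendall · (x + y)) = egf (kendall · x) * egf (kendall · y) := by
  refine eq_of_derivative_eq_mul (derivative_egf_kendall _) ?_ ?_ ?_
  · simp only [Pi.add_apply, egf_add, Derivation.leibniz, derivative_egf_kendall, smul_eq_mul]
    ring
  all_goals simp [constantCoeff_egf_kendall]

/-- The sequence `κ 1, κ 2, …` consists of the cumulants of the random variable `Z`; they are
characterised by the moment–cumulant relations `E[Zⁿ] = Γₙ(κ 1, …, κ n)`. The value `κ 0` is
irrelevant. -/
def HasCumulants {Ω : Type*} {_ : MeasurableSpace Ω} (Z : Ω → ℝ) (κ : ℕ → ℝ) (μ : Measure Ω) :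
    Prop :=
  ∀ n : ℕ, ∫ ω, Z ω ^ n ∂μ = kendall n κ

section Cumulants

variable {Ω : Type*} {mΩ : MeasurableSpace Ω} {μ : Measure Ω} {Z W : Ω → ℝ} {κ κ' : ℕ → ℝ}

lemma hasCumulants_of_two_le [IsProbabilityMeasure μ] (hκ : κ 1 = 0) (h1 : ∫ ω, Z ω ∂μ = 0)
    (h : ∀ n, 2 ≤ n → ∫ ω, Z ω ^ n ∂μ = kendall n κ) : HasCumulants Z κ μ
  | 0 => by simp [kendall_zero]
  | 1 => by simp [kendall_succ, kendall_zero, hκ, h1]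
  | n + 2 => h _ (Nat.le_add_left 2 n)

lemma integral_pow_add_of_indepFun [IsFiniteMeasure μ] (hZ : HasAllMoments Z μ)
    (hW : HasAllMoments W μ) (hZW : IndepFun Z W μ) (n : ℕ) :
    ∫ ω, (Z ω + W ω) ^ n ∂μ = ∑ j ∈ Finset.range (n + 1),
      (n.choose j : ℝ) * (∫ ω, Z ω ^ j ∂μ) * ∫ ω, W ω ^ (n - j) ∂μ := by
  have hmul (j : ℕ) : ∫ ω, Z ω ^ j * W ω ^ (n - j) ∂μ =
      (∫ ω, Z ω ^ j ∂μ) * ∫ ω, W ω ^ (n - j) ∂μ :=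
    (hZW.comp (measurable_id.pow_const j)
      (measurable_id.pow_const (n - j))).integral_fun_mul_eq_mul_integral
      (hZ.pow j).aestronglyMeasurable (hW.pow (n - j)).aestronglyMeasurable
  simp only [add_pow, mul_comm _ ((n.choose _ : ℕ) : ℝ)]
  rw [integral_finsetSum _ fun j _ => ((hZ.pow j).mul (hW.pow (n - j))).integrable.const_mul _]
  simp only [integral_const_mul, hmul, mul_assoc]

/-- On exponential generating functions independence means multiplication of the moments, while
`egf_kendall_add` turns this into addition of the cumulants; it remains to cancel. -/
lemma HasCumulants.sub_of_indepFun [IsFiniteMeasure μ] (hZ : HasAllMoments Z μ)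
    (hW : HasAllMoments W μ) (hZκ : HasCumulants Z κ μ) (hWκ' : HasCumulants W κ' μ)
    (hind : IndepFun Z (fun ω => W ω - Z ω) μ) :
    HasCumulants (fun ω => W ω - Z ω) (κ' - κ) μ := by
  have hne : egf (kendall · κ) ≠ 0 := fun h => by
    simpa [h] using constantCoeff_egf_kendall κ
  have hmoments : egf (kendall · κ') =
      egf (kendall · κ) * egf (fun n => ∫ ω, (W ω - Z ω) ^ n ∂μ) := by
    rw [egf_mul]
    congr 1 with n
    have := integral_pow_add_of_indepFun hZ (hW.sub hZ) hind n
    simpa only [add_sub_cancel, hWκ' n, hZκ _] using this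
  refine congrFun (egf_injective (mul_left_cancel₀ hne ?_))
  rw [← hmoments, ← egf_kendall_add, add_sub_cancel]

lemma HasCumulants.integral_pow_succ_sub (hZ : HasCumulants Z κ μ) (m : ℕ) :
    ∫ ω, Z ω ^ (m + 1) ∂μ - κ (m + 1) = ∑ i ∈ Finset.range m,
      (m.choose (i + 1) : ℝ) * (∫ ω, Z ω ^ (i + 1) ∂μ) * κ (m - i) := by
  rw [hZ, kendall_succ, Finset.sum_range_succ']
  simp only [kendall_zero, Nat.choose_zero_right, Nat.cast_one, one_mul, Nat.sub_zero,
    add_sub_cancel_right, Nat.add_sub_add_right, hZ _]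

end Cumulants

/-! ### Jumps of cadlag paths -/

/-- The jump `Δf_u = f u - f (u-)`. Since `leftLim f 0 = f 0`, there is no jump at `0`. -/
noncomputable def jump (f : ℝ≥0 → ℝ) (u : ℝ≥0) : ℝ := f u - Function.leftLim f u

/-- The jumps of `f` in the interval `(s, t]`, extended by `0`. -/
noncomputable def jumpsOn (f : ℝ≥0 → ℝ) (s t : ℝ≥0) : ℝ≥0 → ℝ := (Set.Ioc s t).indicator (jump f)

namespace IsCadlag

variable {f : ℝ≥0 → ℝ}

lemma tendsto_leftLim (hf : IsCadlag f) (x : ℝ≥0) :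
    Tendsto f (𝓝[<] x) (𝓝 (Function.leftLim f x)) := by
  rcases eq_zero_or_pos x with rfl | hx
  · simp
  · obtain ⟨l, hl⟩ := hf.2 x hx
    have : (𝓝[<] x).NeBot := nhdsLT_neBot_of_exists_lt ⟨0, hx⟩
    rwa [leftLim_eq_of_tendsto hl]

lemma abs_jump_le_of_frequently (hf : IsCadlag f) {y : ℝ≥0} {ε : ℝ}
    (h : ∃ᶠ u in 𝓝[<] y, |f y - f u| ≤ ε) : |jump f y| ≤ ε :=
  le_of_tendsto_of_frequently (tendsto_const_nhds.sub (hf.tendsto_leftLim y)).abs h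

lemma exists_nhds_abs_sub_le (hf : IsCadlag f) (x : ℝ≥0) {ε : ℝ} (hε : 0 < ε) :
    ∃ U ∈ 𝓝 x, (∀ u ∈ U, ∀ v ∈ U, (u < x ↔ v < x) → |f v - f u| ≤ ε) ∧
      ∀ u ∈ U, ∀ v ∈ U, u < x → x ≤ v → |f v - f u - jump f x| ≤ ε := by
  have hleft := (hf.tendsto_leftLim x).eventually (Metric.ball_mem_nhds _ (half_pos hε))
  have hright := (hf.1 x).eventually (Metric.ball_mem_nhds _ (half_pos hε))
  rw [eventually_nhdsWithin_iff] at hleft hright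
  refine ⟨_, hleft.and hright, fun u hu v hv huv => ?_, fun u hu v hv hux hxv => ?_⟩
  · rcases lt_or_ge u x with hux | hux
    · have h₁ := hu.1 hux
      have h₂ := hv.1 (huv.1 hux)
      rw [Real.dist_eq, abs_lt] at h₁ h₂
      exact abs_le.2 ⟨by linarith, by linarith⟩
    · have h₁ := hu.2 hux
      have h₂ := hv.2 (not_lt.1 fun h => hux.not_gt (huv.2 h))
      rw [Real.dist_eq, abs_lt] at h₁ h₂
      exact abs_le.2 ⟨by linarith, by linarith⟩
  · have h₁ := hu.1 hux
    have h₂ := hv.2 hxv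
    rw [Real.dist_eq, abs_lt] at h₁ h₂
    rw [jump]
    exact abs_le.2 ⟨by linarith, by linarith⟩

lemma exists_abs_sub_jumpsOn_le (hf : IsCadlag f) (T : ℝ≥0) {ε : ℝ} (hε : 0 < ε) :
    ∃ δ > 0, ∀ a b : ℝ≥0, a ≤ b → b ≤ T → dist a b < δ →
      ∃ x, |f b - f a - jumpsOn f a b x| ≤ ε ∧ ∀ y ≠ x, |jumpsOn f a b y| ≤ ε := by
  choose U hU hsame hcross using fun x => hf.exists_nhds_abs_sub_le x hε
  obtain ⟨δ, hδ, hcover⟩ := lebesgue_number_lemma_of_metric (isCompact_Icc (a := 0) (b := T))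
    (fun x => isOpen_interior (s := U x))
    (fun x _ => Set.mem_iUnion.2 ⟨x, mem_interior_iff_mem_nhds.2 (hU x)⟩)
  refine ⟨δ, hδ, fun a b hab hbT hd => ?_⟩
  obtain ⟨x, hx⟩ := hcover a ⟨zero_le, hab.trans hbT⟩
  have hmem : ∀ u ∈ Set.Icc a b, u ∈ U x := fun u hu => by
    refine interior_subset (hx ?_)
    rw [Metric.mem_ball, dist_comm]
    exact (Real.dist_left_le_of_mem_uIcc (Set.mem_uIcc_of_le (by simpa using hu.1)
      (by simpa using hu.2))).trans_lt hd
  have ha := hmem a ⟨le_rfl, hab⟩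
  have hb := hmem b ⟨hab, le_rfl⟩
  refine ⟨x, ?_, fun y hyx => ?_⟩
  · by_cases hxI : x ∈ Set.Ioc a b
    · rw [jumpsOn, Set.indicator_of_mem hxI]
      exact hcross x a ha b hb hxI.1 hxI.2
    · rw [jumpsOn, Set.indicator_of_notMem hxI, sub_zero]
      refine hsame x a ha b hb ⟨fun h => ?_, hab.trans_lt⟩
      exact not_le.1 fun h' => hxI ⟨h, h'⟩
  · by_cases hyI : y ∈ Set.Ioc a b
    · rw [jumpsOn, Set.indicator_of_mem hyI]
      have : (𝓝[<] y).NeBot := nhdsLT_neBot_of_exists_lt ⟨a, hyI.1⟩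
      have hside : ∀ᶠ u in 𝓝[<] y, (u < x ↔ y < x) := by
        rcases lt_or_gt_of_ne hyx with hlt | hgt
        · filter_upwards [self_mem_nhdsWithin] with u hu
          exact iff_of_true (lt_trans hu hlt) hlt
        · filter_upwards [Ioo_mem_nhdsLT hgt] with u hu
          exact iff_of_false hu.1.not_gt hgt.not_gt
      refine hf.abs_jump_le_of_frequently (Eventually.frequently ?_)
      filter_upwards [Ioo_mem_nhdsLT hyI.1, hside] with u hu hux
      exact hsame x u (hmem u ⟨hu.1.le, hu.2.le.trans hyI.2⟩) y (hmem y ⟨hyI.1.le, hyI.2⟩) hux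
    · rw [jumpsOn, Set.indicator_of_notMem hyI, abs_zero]
      exact hε.le

end IsCadlag

/-- The point number `k` of the partition of `[s, t]` into `N + 1` intervals of equal length. -/
noncomputable def unifPartition (s t : ℝ≥0) (N k : ℕ) : ℝ≥0 := s + (t - s) * (k / (N + 1))

section UnifPartition

variable {s t : ℝ≥0} {N : ℕ}

lemma unifPartition_zero : unifPartition s t N 0 = s := by simp [unifPartition]

lemma unifPartition_last (h : s ≤ t) : unifPartition s t N (N + 1) = t := by
  have : (N : ℝ≥0) + 1 ≠ 0 := by positivity
  simp [unifPartition, this, h]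

lemma unifPartition_mono : Monotone (unifPartition s t N) := fun i j hij => by
  unfold unifPartition
  gcongr

lemma unifPartition_le (h : s ≤ t) {k : ℕ} (hk : k ≤ N + 1) : unifPartition s t N k ≤ t :=
  (unifPartition_mono hk).trans_eq (unifPartition_last h)

lemma le_unifPartition (k : ℕ) : s ≤ unifPartition s t N k := le_self_add

lemma eventually_dist_unifPartition_lt (s t : ℝ≥0) {δ : ℝ} (hδ : 0 < δ) :
    ∀ᶠ N : ℕ in atTop, ∀ k, dist (unifPartition s t N k) (unifPartition s t N (k + 1)) < δ := by
  have h := (tendsto_one_div_add_atTop_nhds_zero_nat (𝕜 := ℝ)).const_mul ((t - s : ℝ≥0) : ℝ)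
  rw [mul_zero] at h
  filter_upwards [h.eventually (gt_mem_nhds hδ)] with N hN k
  rw [NNReal.dist_eq, abs_sub_comm, abs_of_nonneg (by simpa using unifPartition_mono k.le_succ)]
  refine lt_of_eq_of_lt ?_ hN
  simp only [unifPartition]
  push_cast
  ring

end UnifPartition

/-- The increment of `f` over the interval number `k` of the uniform partition of `[s, t]`. -/
noncomputable def incr (f : ℝ≥0 → ℝ) (s t : ℝ≥0) (N k : ℕ) : ℝ :=
  f (unifPartition s t N (k + 1)) - f (unifPartition s t N k)

lemma IsCadlag.eventually_incr_near_jumpsOn {f : ℝ≥0 → ℝ} (hf : IsCadlag f) {s t : ℝ≥0}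
    (hst : s ≤ t) {ε : ℝ} (hε : 0 < ε) :
    ∀ᶠ N in atTop, ∀ k ∈ Finset.range (N + 1), ∃ x,
      |incr f s t N k - jumpsOn f (unifPartition s t N k) (unifPartition s t N (k + 1)) x| ≤ ε ∧
      ∀ y ≠ x, |jumpsOn f (unifPartition s t N k) (unifPartition s t N (k + 1)) y| ≤ ε := by
  obtain ⟨δ, hδ, h⟩ := hf.exists_abs_sub_jumpsOn_le t hε
  filter_upwards [eventually_dist_unifPartition_lt s t hδ] with N hN k hk
  exact h _ _ (unifPartition_mono k.le_succ) (unifPartition_le hst (Finset.mem_range.1 hk)) (hN k)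

/-! ### Sums over jumps and over increments -/

section Sums

variable {α : Type*} [AddCommMonoid α]

/-- The sum `∑ g (Δf_u)` over the jumps of `f` in `(s, t]`, where `g 0 = 0`. -/
noncomputable def jumpSum [TopologicalSpace α] (g : ℝ → α) (f : ℝ≥0 → ℝ) (s t : ℝ≥0) : α :=
  ∑' u, g (jumpsOn f s t u)

/-- The sum of `g` over the increments of `f` along the uniform partition of `[s, t]`. -/
noncomputable def incrSum (g : ℝ → α) (f : ℝ≥0 → ℝ) (s t : ℝ≥0) (N : ℕ) : α :=
  ∑ k ∈ Finset.range (N + 1), g (incr f s t N k)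

lemma comp_jumpsOn_add {g : ℝ → α} (hg : g 0 = 0) (f : ℝ≥0 → ℝ) {r s t : ℝ≥0} (hrs : r ≤ s)
    (hst : s ≤ t) (u : ℝ≥0) :
    g (jumpsOn f r s u) + g (jumpsOn f s t u) = g (jumpsOn f r t u) := by
  unfold jumpsOn
  rw [← Set.Ioc_union_Ioc_eq_Ioc hrs hst]
  by_cases h₁ : u ∈ Set.Ioc r s
  · have h₂ : u ∉ Set.Ioc s t := fun h => h.1.not_ge h₁.2
    simp [h₁, h₂, hg]
  · by_cases h₂ : u ∈ Set.Ioc s t <;> simp [h₁, h₂, hg]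

variable [TopologicalSpace α] [ContinuousAdd α]

lemma hasSum_jumpsOn_partition {g : ℝ → α} (hg : g 0 = 0) (f : ℝ≥0 → ℝ) {p : ℕ → ℝ≥0}
    (hp : Monotone p) {a : ℕ → α} (M : ℕ)
    (ha : ∀ k < M, HasSum (fun u => g (jumpsOn f (p k) (p (k + 1)) u)) (a k)) :
    HasSum (fun u => g (jumpsOn f (p 0) (p M) u)) (∑ k ∈ Finset.range M, a k) := by
  induction M with
  | zero => simp [jumpsOn, hg]
  | succ M ih =>
    rw [Finset.sum_range_succ]
    refine ((ih fun k hk => ha k (hk.trans M.lt_succ_self)).add (ha M M.lt_succ_self)).congr_fun ?_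
    exact fun u => (comp_jumpsOn_add hg f (hp M.zero_le) (hp M.le_succ) u).symm

lemma hasSum_jumpsOn_unifPartition {g : ℝ → α} (hg : g 0 = 0) (f : ℝ≥0 → ℝ) {s t : ℝ≥0}
    (hst : s ≤ t) {N : ℕ}
    (h : ∀ k ∈ Finset.range (N + 1), Summable fun u =>
      g (jumpsOn f (unifPartition s t N k) (unifPartition s t N (k + 1)) u)) :
    HasSum (fun u => g (jumpsOn f s t u)) (∑ k ∈ Finset.range (N + 1),
      jumpSum g f (unifPartition s t N k) (unifPartition s t N (k + 1))) := by
  simpa only [unifPartition_zero, unifPartition_last hst, jumpSum] using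
    hasSum_jumpsOn_partition hg f unifPartition_mono (N + 1)
      fun k hk => (h k (Finset.mem_range.2 hk)).hasSum

end Sums

section ENNRealSums

variable {f : ℝ≥0 → ℝ} {s t : ℝ≥0} {h h₁ h₂ : ℝ → ENNReal} {ε : ℝ}

lemma jumpSum_eq_sum_unifPartition (h0 : h 0 = 0) (f : ℝ≥0 → ℝ) (hst : s ≤ t) (N : ℕ) :
    jumpSum h f s t = ∑ k ∈ Finset.range (N + 1),
      jumpSum h f (unifPartition s t N k) (unifPartition s t N (k + 1)) :=
  (hasSum_jumpsOn_unifPartition h0 f hst fun _ _ => ENNReal.summable).tsum_eq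

lemma IsCadlag.eventually_jumpSum_le_incrSum (hf : IsCadlag f) (hst : s ≤ t) (hε : 0 < ε)
    (hh : ∀ x y, |x - y| ≤ ε → h₁ x ≤ h₂ y) (h0 : h₂ 0 = 0) :
    ∀ᶠ N in atTop, jumpSum h₁ f s t ≤ incrSum h₂ f s t N := by
  have hsmall (x : ℝ) (hx : |x| ≤ ε) : h₁ x = 0 :=
    nonpos_iff_eq_zero.1 ((hh x 0 (by simpa using hx)).trans_eq h0)
  filter_upwards [hf.eventually_incr_near_jumpsOn hst hε] with N hN
  rw [jumpSum_eq_sum_unifPartition (hsmall 0 (by simpa using hε.le)) f hst N]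
  refine Finset.sum_le_sum fun k hk => ?_
  obtain ⟨x, hx, hother⟩ := hN k hk
  rw [jumpSum, tsum_eq_single x fun y hy => hsmall _ (hother y hy)]
  exact hh _ _ (by rwa [abs_sub_comm])

lemma IsCadlag.eventually_incrSum_le_jumpSum (hf : IsCadlag f) (hst : s ≤ t) (hε : 0 < ε)
    (hh : ∀ x y, |x - y| ≤ ε → h₁ x ≤ h₂ y) (h0 : h₂ 0 = 0) :
    ∀ᶠ N in atTop, incrSum h₁ f s t N ≤ jumpSum h₂ f s t := by
  filter_upwards [hf.eventually_incr_near_jumpsOn hst hε] with N hN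
  rw [jumpSum_eq_sum_unifPartition h0 f hst N]
  refine Finset.sum_le_sum fun k hk => ?_
  obtain ⟨x, hx, -⟩ := hN k hk
  exact (hh _ _ hx).trans (ENNReal.le_tsum x)

/-- The largest function `h'` with `h' x ≤ h y` whenever `|x - y| < ε`. These lower approximations
of `h` absorb the error of replacing a jump by an increment of the path. -/
noncomputable def ballInf (ε : ℝ) (h : ℝ → ENNReal) (x : ℝ) : ENNReal := ⨅ y ∈ Metric.ball x ε, h y

lemma ballInf_le {x y : ℝ} (hxy : |x - y| < ε) : ballInf ε h x ≤ h y :=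
  iInf₂_le y (by rwa [Metric.mem_ball, Real.dist_eq, abs_sub_comm])

lemma ballInf_le_ballInf {ε' x y : ℝ} (hxy : |x - y| + ε' ≤ ε) :
    ballInf ε h x ≤ ballInf ε' h y :=
  biInf_mono (Metric.ball_subset_ball' (by rwa [Real.dist_eq, abs_sub_comm, add_comm]))

lemma ballInf_zero (hε : 0 < ε) (h0 : h 0 = 0) : ballInf ε h 0 = 0 :=
  nonpos_iff_eq_zero.1 ((ballInf_le (by simpa using hε)).trans_eq h0)

lemma measurable_ballInf (ε : ℝ) (h : ℝ → ENNReal) : Measurable (ballInf ε h) := by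
  refine measurable_of_Iio fun c => IsOpen.measurableSet ?_
  have : ballInf ε h ⁻¹' Set.Iio c = ⋃ y ∈ {y | h y < c}, Metric.ball y ε := by
    ext x
    simp [ballInf, iInf_lt_iff, dist_comm, and_comm]
  rw [this]
  exact isOpen_biUnion fun _ _ => Metric.isOpen_ball

lemma monotone_ballInf_half_pow (h : ℝ → ENNReal) (x : ℝ) :
    Monotone fun j : ℕ => ballInf ((1 / 2) ^ j) h x := fun i j hij =>
  ballInf_le_ballInf (by
    simpa using pow_le_pow_of_le_one (by norm_num) (by norm_num : (1 / 2 : ℝ) ≤ 1) hij)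

lemma iSup_ballInf_half_pow (hh : Continuous h) (x : ℝ) :
    ⨆ j : ℕ, ballInf ((1 / 2) ^ j) h x = h x := by
  refine le_antisymm (iSup_le fun j => ballInf_le (by simp)) (le_of_forall_lt fun c hc => ?_)
  obtain ⟨c', hcc', hc'⟩ := exists_between hc
  obtain ⟨δ, hδ, hball⟩ := Metric.mem_nhds_iff.1 (hh.continuousAt.eventually (lt_mem_nhds hc'))
  obtain ⟨j, hj⟩ := exists_pow_lt_of_lt_one hδ (by norm_num : (1 / 2 : ℝ) < 1)
  refine hcc'.trans_le (le_iSup_of_le j (le_iInf₂ fun y hy => ?_))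
  exact (hball (Metric.ball_subset_ball hj.le hy) : c' < h y).le

lemma iSup_jumpSum_ballInf (hh : Continuous h) (f : ℝ≥0 → ℝ) (s t : ℝ≥0) :
    ⨆ j : ℕ, jumpSum (ballInf ((1 / 2) ^ j) h) f s t = jumpSum h f s t := by
  simp only [jumpSum, ENNReal.tsum_eq_iSup_sum, ← iSup_ballInf_half_pow hh (jumpsOn f s t _)]
  rw [iSup_comm]
  exact iSup_congr fun S =>
    (ENNReal.finsetSum_iSup_of_monotone fun u => monotone_ballInf_half_pow h _).symm

lemma IsCadlag.jumpSum_le_liminf_incrSum (hf : IsCadlag f) (hst : s ≤ t) (hh : Continuous h)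
    (h0 : h 0 = 0) : jumpSum h f s t ≤ liminf (incrSum h f s t) atTop := by
  rw [← iSup_jumpSum_ballInf hh]
  refine iSup_le fun j => le_liminf_of_le (by isBoundedDefault) ?_
  have hj : (0 : ℝ) < (1 / 2) ^ (j + 1) := by positivity
  refine hf.eventually_jumpSum_le_incrSum hst hj (fun x y hxy => ballInf_le ?_) h0
  exact hxy.trans_lt (pow_lt_pow_right_of_lt_one₀ (by norm_num) (by norm_num) j.lt_succ_self)

lemma IsCadlag.iSup_liminf_incrSum_ballInf (hf : IsCadlag f) (hst : s ≤ t) (hh : Continuous h)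
    (h0 : h 0 = 0) :
    ⨆ j : ℕ, liminf (incrSum (ballInf ((1 / 2) ^ j) h) f s t) atTop = jumpSum h f s t := by
  have hpos (j : ℕ) : (0 : ℝ) < (1 / 2) ^ (j + 1) := by positivity
  refine le_antisymm (iSup_le fun j => ?_) ?_
  · refine (liminf_le_limsup).trans (limsup_le_of_le (by isBoundedDefault) ?_)
    refine hf.eventually_incrSum_le_jumpSum hst (hpos j) (fun x y hxy => ballInf_le ?_) h0
    exact hxy.trans_lt (pow_lt_pow_right_of_lt_one₀ (by norm_num) (by norm_num) j.lt_succ_self)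
  · rw [← iSup_jumpSum_ballInf hh]
    refine iSup_le fun j => le_iSup_of_le (j + 1) (le_liminf_of_le (by isBoundedDefault) ?_)
    refine hf.eventually_jumpSum_le_incrSum hst (hpos j) (fun x y hxy => ballInf_le_ballInf ?_)
      (ballInf_zero (hpos j) h0)
    calc |x - y| + (1 / 2) ^ (j + 1) ≤ (1 / 2) ^ (j + 1) + (1 / 2) ^ (j + 1) := by gcongr
      _ = (1 / 2) ^ j := by ring

end ENNRealSums

section RealSeries

variable {ι : Type*} {c : ι → ℝ}

lemma tsum_enorm_ne_top_iff_summable : ∑' i, ‖c i‖ₑ ≠ ⊤ ↔ Summable c := by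
  simp only [enorm_eq_nnnorm, ENNReal.tsum_coe_ne_top_iff_summable, ← summable_norm_iff (f := c),
    ← NNReal.summable_coe, coe_nnnorm]

lemma tsum_eq_ite_toReal_sub_toReal (c : ι → ℝ) :
    ∑' i, c i = if ∑' i, ‖c i‖ₑ = ⊤ then 0 else
      (∑' i, ENNReal.ofReal (c i)).toReal - (∑' i, ENNReal.ofReal (-c i)).toReal := by
  split_ifs with h
  · exact tsum_eq_zero_of_not_summable fun hc => tsum_enorm_ne_top_iff_summable.2 hc h
  · have hpos : ∑' i, ENNReal.ofReal (c i) ≠ ⊤ :=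
      ne_top_of_le_ne_top h (ENNReal.tsum_le_tsum fun i => Real.ofReal_le_enorm _)
    have hneg : ∑' i, ENNReal.ofReal (-c i) ≠ ⊤ := ne_top_of_le_ne_top h
      (ENNReal.tsum_le_tsum fun i => (Real.ofReal_le_enorm _).trans_eq (enorm_neg _))
    rw [ENNReal.tsum_toReal_eq (ENNReal.ne_top_of_tsum_ne_top hpos),
      ENNReal.tsum_toReal_eq (ENNReal.ne_top_of_tsum_ne_top hneg),
      ← (ENNReal.summable_toReal hpos).tsum_sub (ENNReal.summable_toReal hneg)]
    exact tsum_congr fun i => by simp [ENNReal.toReal_ofReal']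

lemma summable_pow_succ_of_abs_pow {n : ℕ} (hn : n ≠ 0) (hc : Summable fun i => |c i| ^ n) :
    Summable fun i => c i ^ (n + 1) := by
  refine Summable.of_norm_bounded (hc.mul_left (1 + ∑' i, |c i| ^ n)) fun i => ?_
  have hle : |c i| ^ n ≤ ∑' i, |c i| ^ n := hc.le_tsum i fun _ _ => by positivity
  rw [Real.norm_eq_abs, abs_pow, pow_succ']
  gcongr
  rcases le_total |c i| 1 with h | h
  · linarith [pow_nonneg (abs_nonneg (c i)) n]
  · linarith [le_self_pow₀ h hn]

lemma abs_pow_succ_sub_pow_succ_le (n : ℕ) {x y ε : ℝ} (h : |x - y| ≤ ε) :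
    |x ^ (n + 1) - y ^ (n + 1)| ≤ (n + 1) * ε * (|x| ^ n + |y| ^ n) := by
  have hmax : max |x| |y| ^ n ≤ |x| ^ n + |y| ^ n := by
    rcases max_choice |x| |y| with h | h <;> rw [h] <;> simp [pow_nonneg]
  have hε : 0 ≤ ε := (abs_nonneg _).trans h
  calc |x ^ (n + 1) - y ^ (n + 1)| ≤ |x - y| * ↑(n + 1) * max |x| |y| ^ n :=
        abs_pow_sub_pow_le x y (n + 1)
    _ ≤ ε * ↑(n + 1) * (|x| ^ n + |y| ^ n) := by gcongr
    _ = (n + 1) * ε * (|x| ^ n + |y| ^ n) := by push_cast; ring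

lemma abs_pow_succ_sub_tsum_pow_succ_le {n : ℕ} {d ε : ℝ} {i₀ : ι} (hn : n ≠ 0)
    (hc : Summable fun i => |c i| ^ n) (hd : |d - c i₀| ≤ ε) (hε : ∀ i ≠ i₀, |c i| ≤ ε) :
    |d ^ (n + 1) - ∑' i, c i ^ (n + 1)| ≤ (n + 2) * ε * (|d| ^ n + ∑' i, |c i| ^ n) := by
  have hε0 : 0 ≤ ε := (abs_nonneg _).trans hd
  have hle : |c i₀| ^ n ≤ ∑' i, |c i| ^ n := hc.le_tsum i₀ fun _ _ => by positivity
  have hmain : |d ^ (n + 1) - c i₀ ^ (n + 1)| ≤ (n + 1) * ε * (|d| ^ n + ∑' i, |c i| ^ n) :=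
    (abs_pow_succ_sub_pow_succ_le n hd).trans (by gcongr)
  classical
  have hrest : |∑' i, c i ^ (n + 1) - c i₀ ^ (n + 1)| ≤ ε * ∑' i, |c i| ^ n := by
    have hsub := (summable_pow_succ_of_abs_pow hn hc).hasSum.sub
      (hasSum_ite_eq i₀ (c i₀ ^ (n + 1)))
    rw [← hsub.tsum_eq, ← Real.norm_eq_abs]
    refine tsum_of_norm_bounded (hc.hasSum.mul_left ε) fun i => ?_
    rcases eq_or_ne i i₀ with rfl | hi
    · rw [if_pos rfl, sub_self, norm_zero]
      positivity
    · rw [if_neg hi, sub_zero, Real.norm_eq_abs, abs_pow, pow_succ']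
      gcongr
      exact hε i hi
  calc |d ^ (n + 1) - ∑' i, c i ^ (n + 1)|
      ≤ |d ^ (n + 1) - c i₀ ^ (n + 1)| + |c i₀ ^ (n + 1) - ∑' i, c i ^ (n + 1)| :=
        abs_sub_le _ _ _
    _ ≤ (n + 1) * ε * (|d| ^ n + ∑' i, |c i| ^ n) + ε * (|d| ^ n + ∑' i, |c i| ^ n) := by
        rw [abs_sub_comm (c i₀ ^ (n + 1))]
        refine add_le_add hmain (hrest.trans ?_)
        gcongr
        exact le_add_of_nonneg_left (by positivity)
    _ = (n + 2) * ε * (|d| ^ n + ∑' i, |c i| ^ n) := by ring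

end RealSeries

section JumpSums

lemma abs_jumpsOn_le_abs_jumpsOn (f : ℝ≥0 → ℝ) {a b s t : ℝ≥0}
    (h : Set.Ioc a b ⊆ Set.Ioc s t) (u : ℝ≥0) : |jumpsOn f a b u| ≤ |jumpsOn f s t u| := by
  by_cases hu : u ∈ Set.Ioc a b
  · simp [jumpsOn, hu, h hu]
  · simp [jumpsOn, hu]

/-- The series `∑ |Δf_u|ⁿ` over the jumps in `(s, t]` converges. -/
def SummableJumps (n : ℕ) (f : ℝ≥0 → ℝ) (s t : ℝ≥0) : Prop :=
  Summable fun u => |jumpsOn f s t u| ^ n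

variable {f : ℝ≥0 → ℝ} {s t : ℝ≥0} {n : ℕ}

lemma SummableJumps.mono {a b : ℝ≥0} (hf : SummableJumps n f s t)
    (h : Set.Ioc a b ⊆ Set.Ioc s t) : SummableJumps n f a b :=
  hf.of_nonneg_of_le (fun _ => by positivity) fun u =>
    pow_le_pow_left₀ (abs_nonneg _) (abs_jumpsOn_le_abs_jumpsOn f h u) n

lemma jumpSum_pow_add {r : ℝ≥0} (hn : n ≠ 0) (hrs : r ≤ s) (hst : s ≤ t)
    (hf : SummableJumps n f r t) :
    jumpSum (· ^ n) f r s + jumpSum (· ^ n) f s t = jumpSum (· ^ n) f r t := by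
  have hsum (a b : ℝ≥0) (h : Set.Ioc a b ⊆ Set.Ioc r t) :
      Summable fun u => jumpsOn f a b u ^ n :=
    .of_abs (by simp only [abs_pow]; exact hf.mono h)
  rw [jumpSum, jumpSum, ← (hsum r s (Set.Ioc_subset_Ioc_right hst)).tsum_add
    (hsum s t (Set.Ioc_subset_Ioc_left hrs))]
  exact tsum_congr (comp_jumpsOn_add (g := fun x : ℝ => x ^ n) (zero_pow hn) f hrs hst)

/-- On each interval of a fine partition the increment is close to a single jump and all other
jumps are small. -/
lemma IsCadlag.isLittleO_incrSum_sub_jumpSum (hf : IsCadlag f) (hst : s ≤ t) (hn : n ≠ 0)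
    (hsum : SummableJumps n f s t) :
    (fun N => incrSum (· ^ (n + 1)) f s t N - jumpSum (· ^ (n + 1)) f s t) =o[atTop]
      fun N => incrSum (|·| ^ n) f s t N + jumpSum (|·| ^ n) f s t := by
  rw [Asymptotics.isLittleO_iff]
  intro c hc
  have hc' : 0 < c / (n + 2) := by positivity
  filter_upwards [hf.eventually_incr_near_jumpsOn hst hc'] with N hN
  have hpiece (k) (hk : k ∈ Finset.range (N + 1)) :
      SummableJumps n f (unifPartition s t N k) (unifPartition s t N (k + 1)) :=
    hsum.mono (Set.Ioc_subset_Ioc (le_unifPartition k)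
      (unifPartition_le hst (Finset.mem_range.1 hk)))
  have hodd := (hasSum_jumpsOn_unifPartition (g := fun x : ℝ => x ^ (n + 1))
    (zero_pow n.succ_ne_zero) f hst fun k hk =>
      summable_pow_succ_of_abs_pow hn (hpiece k hk)).tsum_eq
  have habs := (hasSum_jumpsOn_unifPartition (g := fun x : ℝ => |x| ^ n)
    (by simp [hn]) f hst hpiece).tsum_eq
  simp only [jumpSum, incrSum] at hodd habs ⊢
  rw [hodd, habs, ← Finset.sum_sub_distrib, ← Finset.sum_add_distrib]
  refine le_trans ?_ (mul_le_mul_of_nonneg_left (le_abs_self _) hc.le)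
  rw [Finset.mul_sum]
  refine norm_sum_le_of_le _ fun k hk => ?_
  obtain ⟨x, hx, hy⟩ := hN k hk
  refine (abs_pow_succ_sub_tsum_pow_succ_le hn (hpiece k hk) hx hy).trans_eq ?_
  rw [mul_div_cancel₀ _ (by positivity)]

end JumpSums

section MeasurableJumpSum

variable {Ω : Type*} {mΩ : MeasurableSpace Ω} {X : ℝ≥0 → Ω → ℝ} {s t : ℝ≥0}

lemma measurable_incrSum {α : Type*} [AddCommMonoid α] [MeasurableSpace α] [MeasurableAdd₂ α]
    {g : ℝ → α} (hg : Measurable g) (hst : s ≤ t) (hX : ∀ u ≤ t, Measurable (X u)) (N : ℕ) :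
    Measurable fun ω => incrSum g (X · ω) s t N :=
  Finset.measurable_fun_sum _ fun _ hk =>
    hg.comp ((hX _ (unifPartition_le hst (Finset.mem_range.1 hk))).sub
      (hX _ (unifPartition_le hst (Finset.mem_range.1 hk).le)))

lemma measurable_jumpSum_ennreal {h : ℝ → ENNReal} (hh : Continuous h) (h0 : h 0 = 0)
    (hst : s ≤ t) (hX : ∀ u ≤ t, Measurable (X u)) (hcad : ∀ ω, IsCadlag (X · ω)) :
    Measurable fun ω => jumpSum h (X · ω) s t := by
  simp only [← fun ω => (hcad ω).iSup_liminf_incrSum_ballInf hst hh h0]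
  exact .iSup fun j => .liminf fun N => measurable_incrSum (measurable_ballInf _ _) hst hX N

lemma measurable_jumpSum {g : ℝ → ℝ} (hg : Continuous g) (h0 : g 0 = 0) (hst : s ≤ t)
    (hX : ∀ u ≤ t, Measurable (X u)) (hcad : ∀ ω, IsCadlag (X · ω)) :
    Measurable fun ω => jumpSum g (X · ω) s t := by
  have hmeas {h : ℝ → ENNReal} (hh : Continuous h) (h0' : h 0 = 0) :=
    measurable_jumpSum_ennreal hh h0' hst hX hcad
  simp only [jumpSum, tsum_eq_ite_toReal_sub_toReal]
  refine Measurable.ite (hmeas (h := fun x => ‖g x‖ₑ) hg.enorm (by simp [h0])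
    (measurableSet_singleton ⊤)) measurable_const (Measurable.sub ?_ ?_)
  · exact (hmeas (h := fun x => ENNReal.ofReal (g x)) (ENNReal.continuous_ofReal.comp hg)
      (by simp [h0])).ennreal_toReal
  · exact (hmeas (h := fun x => ENNReal.ofReal (-g x)) (ENNReal.continuous_ofReal.comp hg.neg)
      (by simp [h0])).ennreal_toReal

end MeasurableJumpSum

lemma variationProc_eq_jumpSum {Ω : Type*} (X : ℝ≥0 → Ω → ℝ) {n : ℕ} (hn : n ≠ 0) (t : ℝ≥0)
    (ω : Ω) : variationProc X n t ω = jumpSum (· ^ n) (X · ω) 0 t :=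
  tsum_congr fun u => by
    by_cases hu : u ∈ Set.Ioc 0 t <;> simp [jumpsOn, jump, hu, hn]

/-! ### Inequalities for powers of real numbers -/

section PowInequalities

lemma pow_add_mul_pow_le_add_pow_of_even {n : ℕ} (hn : Even n) (a b : ℝ) :
    a ^ n + n * (a ^ (n - 1) * b) ≤ (a + b) ^ n := by
  rcases n with _ | n
  · simp
  have bernoulli (x : ℝ) : 1 + (n + 1 : ℕ) * x ≤ (1 + x) ^ (n + 1) := by
    rcases le_or_gt (-2) x with hx | hx
    · exact one_add_mul_le_pow hx _
    · have : (1 : ℝ) ≤ (n + 1 : ℕ) := by exact_mod_cast Nat.le_add_left 1 n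
      nlinarith [hn.pow_nonneg (1 + x)]
  rcases eq_or_ne a 0 with rfl | ha
  · rcases n with _ | n
    · simp at hn
    · simpa using hn.pow_nonneg b
  · calc a ^ (n + 1) + (n + 1 : ℕ) * (a ^ n * b)
        = a ^ (n + 1) * (1 + (n + 1 : ℕ) * (b / a)) := by field_simp; ring
      _ ≤ a ^ (n + 1) * (1 + b / a) ^ (n + 1) :=
        mul_le_mul_of_nonneg_left (bernoulli _) (hn.pow_nonneg a)
      _ = (a + b) ^ (n + 1) := by rw [← mul_pow, mul_add, mul_one, mul_div_cancel₀ _ ha]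

lemma add_pow_add_sub_pow_le_of_even {n : ℕ} (hn : Even n) (hn0 : n ≠ 0) (a b : ℝ) :
    (a + b) ^ n + (a - b) ^ n ≤ 2 ^ (n - 1) * (a ^ n + b ^ n) := by
  obtain ⟨p, rfl⟩ := hn.two_dvd
  have hp : p ≠ 0 := by rintro rfl; simp at hn0
  calc (a + b) ^ (2 * p) + (a - b) ^ (2 * p)
      ≤ ((a + b) ^ 2 + (a - b) ^ 2) ^ p := by
        simpa only [pow_mul] using pow_add_pow_le (sq_nonneg (a + b)) (sq_nonneg (a - b)) hp
    _ = 2 ^ p * (a ^ 2 + b ^ 2) ^ p := by rw [← mul_pow]; ring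
    _ ≤ 2 ^ p * (2 ^ (p - 1) * ((a ^ 2) ^ p + (b ^ 2) ^ p)) := by
        gcongr
        exact add_pow_le (sq_nonneg a) (sq_nonneg b) p
    _ = 2 ^ (2 * p - 1) * (a ^ (2 * p) + b ^ (2 * p)) := by
        rw [← mul_assoc, ← pow_add, pow_mul, pow_mul]
        congr 2
        omega

/-- Compare `a + b / 2` with the midpoint of `a` and `a + b` from both sides: from above by
the previous lemma, from below by the tangent at `a`. -/
lemma pow_le_two_pow_mul_add_pow_sub_of_even {n : ℕ} (hn : Even n) (hn0 : n ≠ 0) (a b : ℝ) :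
    b ^ n ≤ 2 ^ (n - 1) * ((a + b) ^ n - a ^ n - n * (a ^ (n - 1) * b)) := by
  have hmid := add_pow_add_sub_pow_le_of_even hn hn0 (a + b) a
  have htan := pow_add_mul_pow_le_add_pow_of_even hn (2 * a) b
  have htwo : (2 : ℝ) ^ n = 2 ^ (n - 1) * 2 := (pow_sub_one_mul hn0 2).symm
  rw [show a + b + a = 2 * a + b by ring, add_sub_cancel_left] at hmid
  rw [mul_pow, mul_pow, htwo] at htan
  linarith

lemma abs_pow_le_sq_add_pow_two_mul {j : ℕ} (hj : 2 ≤ j) (x : ℝ) :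
    |x| ^ j ≤ x ^ 2 + x ^ (2 * j) := by
  rw [← sq_abs, ← (even_two_mul j).pow_abs]
  rcases le_total |x| 1 with h | h
  · linarith [pow_le_pow_of_le_one (abs_nonneg x) h hj, pow_nonneg (abs_nonneg x) (2 * j)]
  · linarith [pow_le_pow_right₀ h (by omega : j ≤ 2 * j), pow_nonneg (abs_nonneg x) 2]

end PowInequalities

/-! ### Moments of centered additive processes -/

/-- `X` is a centered additive process with respect to the filtration `ℱ`, with finite moments of
all orders. The initial value `X 0` is allowed to be random. -/
structure IsCenteredAdditive {Ω : Type*} {mΩ : MeasurableSpace Ω} (X : ℝ≥0 → Ω → ℝ)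
    (ℱ : Filtration ℝ≥0 mΩ) (μ : Measure Ω) : Prop where
  stronglyAdapted : StronglyAdapted ℱ X
  indep_sub : ∀ ⦃s t : ℝ≥0⦄, s ≤ t →
    Indep (MeasurableSpace.comap (fun ω => X t ω - X s ω) inferInstance) (ℱ s) μ
  tendsto_measure : ∀ (t : ℝ≥0) ⦃ε : ℝ⦄, 0 < ε →
    Tendsto (fun s => μ {ω | ε ≤ |X s ω - X t ω|}) (𝓝 t) (𝓝 0)
  isCadlag : ∀ ω, IsCadlag fun t => X t ω
  hasAllMoments : ∀ t, HasAllMoments (X t) μ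
  integral_eq_zero : ∀ t, ∫ ω, X t ω ∂μ = 0

namespace IsCenteredAdditive

variable {Ω : Type*} {mΩ : MeasurableSpace Ω} {μ : Measure Ω} {X : ℝ≥0 → Ω → ℝ}
  {ℱ : Filtration ℝ≥0 mΩ} {s t : ℝ≥0} {κ : ℝ≥0 → ℕ → ℝ}

lemma measurable_of_le (hX : IsCenteredAdditive X ℱ μ) (hst : s ≤ t) : Measurable[ℱ t] (X s) :=
  (hX.stronglyAdapted s).measurable.mono (ℱ.mono hst) le_rfl

lemma measurable (hX : IsCenteredAdditive X ℱ μ) (t : ℝ≥0) : Measurable (X t) :=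
  (hX.measurable_of_le le_rfl).mono (ℱ.le t) le_rfl

lemma hasAllMoments_sub (hX : IsCenteredAdditive X ℱ μ) (s t : ℝ≥0) :
    HasAllMoments (fun ω => X t ω - X s ω) μ :=
  (hX.hasAllMoments t).sub (hX.hasAllMoments s)

lemma hasAllMoments_incr (hX : IsCenteredAdditive X ℱ μ) (s t : ℝ≥0) (N k : ℕ) :
    HasAllMoments (fun ω => incr (X · ω) s t N k) μ :=
  hX.hasAllMoments_sub _ _

lemma integral_sub_eq_zero (hX : IsCenteredAdditive X ℱ μ) (s t : ℝ≥0) :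
    ∫ ω, (X t ω - X s ω) ∂μ = 0 := by
  rw [integral_sub (hX.hasAllMoments t).integrable (hX.hasAllMoments s).integrable,
    hX.integral_eq_zero, hX.integral_eq_zero, sub_zero]

lemma indepFun_comp_sub (hX : IsCenteredAdditive X ℱ μ) (hst : s ≤ t) {U : Ω → ℝ}
    (hU : Measurable[ℱ s] U) {g : ℝ → ℝ} (hg : Measurable g) :
    IndepFun U (fun ω => g (X t ω - X s ω)) μ := by
  rw [IndepFun_iff_Indep]
  refine indep_of_indep_of_le_left (indep_of_indep_of_le_right (hX.indep_sub hst).symm ?_)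
    hU.comap_le
  exact (hg.comp (comap_measurable _)).comap_le

lemma integral_mul_comp_sub (hX : IsCenteredAdditive X ℱ μ) (hst : s ≤ t) {U : Ω → ℝ}
    (hU : Measurable[ℱ s] U) {g : ℝ → ℝ} (hg : Measurable g) :
    ∫ ω, U ω * g (X t ω - X s ω) ∂μ = (∫ ω, U ω ∂μ) * ∫ ω, g (X t ω - X s ω) ∂μ :=
  (hX.indepFun_comp_sub hst hU hg).integral_fun_mul_eq_mul_integral
    (hU.mono (ℱ.le s) le_rfl).aestronglyMeasurable
    (hg.comp ((hX.measurable t).sub (hX.measurable s))).aestronglyMeasurable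

variable [IsProbabilityMeasure μ]

lemma hasCumulants_sub (hX : IsCenteredAdditive X ℱ μ) (hκ : ∀ t, HasCumulants (X t) (κ t) μ)
    (hst : s ≤ t) : HasCumulants (fun ω => X t ω - X s ω) (κ t - κ s) μ :=
  (hκ s).sub_of_indepFun (hX.hasAllMoments s) (hX.hasAllMoments t) (hκ t)
    (hX.indepFun_comp_sub hst (hX.measurable_of_le le_rfl) measurable_id)

lemma integral_sub_pow_le_of_even (hX : IsCenteredAdditive X ℱ μ) (hst : s ≤ t) {n : ℕ}
    (hn : Even n) (hn0 : n ≠ 0) :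
    ∫ ω, (X t ω - X s ω) ^ n ∂μ ≤ 2 ^ (n - 1) * (∫ ω, X t ω ^ n ∂μ - ∫ ω, X s ω ^ n ∂μ) := by
  have ht := (hX.hasAllMoments t).pow n
  have hs := (hX.hasAllMoments s).pow n
  have hmix :=
    (((hX.hasAllMoments s).pow (n - 1)).mul (hX.hasAllMoments_sub s t)).integrable.const_mul (n : ℝ)
  have hmix_zero : ∫ ω, X s ω ^ (n - 1) * (X t ω - X s ω) ∂μ = 0 := by
    rw [hX.integral_mul_comp_sub hst ((hX.measurable_of_le le_rfl).pow_const _) measurable_id',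
      hX.integral_sub_eq_zero, mul_zero]
  calc ∫ ω, (X t ω - X s ω) ^ n ∂μ
      ≤ ∫ ω, 2 ^ (n - 1) * (X t ω ^ n - X s ω ^ n -
          n * (X s ω ^ (n - 1) * (X t ω - X s ω))) ∂μ :=
        integral_mono ((hX.hasAllMoments_sub s t).pow n).integrable
          (((ht.sub hs).integrable.sub hmix).const_mul _) fun ω => by
            simpa using pow_le_two_pow_mul_add_pow_sub_of_even hn hn0 (X s ω) (X t ω - X s ω)
    _ = 2 ^ (n - 1) * (∫ ω, X t ω ^ n ∂μ - ∫ ω, X s ω ^ n ∂μ) := by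
        rw [integral_const_mul, integral_sub (ht.sub hs).integrable hmix,
          integral_sub ht.integrable hs.integrable, integral_const_mul, hmix_zero, mul_zero,
          sub_zero]

lemma monotone_integral_pow_of_even (hX : IsCenteredAdditive X ℱ μ) {n : ℕ} (hn : Even n)
    (hn0 : n ≠ 0) : Monotone fun t => ∫ ω, X t ω ^ n ∂μ := fun s t hst => by
  have h := (integral_nonneg fun ω => hn.pow_nonneg (X t ω - X s ω)).trans
    (hX.integral_sub_pow_le_of_even hst hn hn0)
  exact sub_nonneg.1 (nonneg_of_mul_nonneg_right h (by positivity))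

lemma sum_integral_incr_pow_le_of_even (hX : IsCenteredAdditive X ℱ μ) (hst : s ≤ t) {n : ℕ}
    (hn : Even n) (hn0 : n ≠ 0) (N : ℕ) :
    ∑ k ∈ Finset.range (N + 1), ∫ ω, incr (X · ω) s t N k ^ n ∂μ ≤
      2 ^ (n - 1) * ∫ ω, X t ω ^ n ∂μ := by
  calc _ ≤ ∑ k ∈ Finset.range (N + 1), 2 ^ (n - 1) * (∫ ω, X (unifPartition s t N (k + 1)) ω ^ n ∂μ
          - ∫ ω, X (unifPartition s t N k) ω ^ n ∂μ) :=
        Finset.sum_le_sum fun k _ =>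
          hX.integral_sub_pow_le_of_even (unifPartition_mono k.le_succ) hn hn0
    _ = 2 ^ (n - 1) * (∫ ω, X t ω ^ n ∂μ - ∫ ω, X s ω ^ n ∂μ) := by
        rw [← Finset.mul_sum,
          Finset.sum_range_sub (fun k => ∫ ω, X (unifPartition s t N k) ω ^ n ∂μ),
          unifPartition_last hst, unifPartition_zero]
    _ ≤ 2 ^ (n - 1) * ∫ ω, X t ω ^ n ∂μ := by
        gcongr
        exact sub_le_self _ (integral_nonneg fun ω => hn.pow_nonneg (X s ω))

lemma exists_sum_integral_abs_incr_pow_le (hX : IsCenteredAdditive X ℱ μ) (hst : s ≤ t) {j : ℕ}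
    (hj : 2 ≤ j) :
    ∃ C : ℝ, ∀ N, ∑ k ∈ Finset.range (N + 1), ∫ ω, |incr (X · ω) s t N k| ^ j ∂μ ≤ C := by
  refine ⟨_, fun N => le_trans ?_ (add_le_add
    (hX.sum_integral_incr_pow_le_of_even hst even_two two_ne_zero N)
    (hX.sum_integral_incr_pow_le_of_even hst (even_two_mul j) (by omega) N))⟩
  rw [← Finset.sum_add_distrib]
  refine Finset.sum_le_sum fun k _ => ?_
  have hD := hX.hasAllMoments_incr s t N k
  rw [← integral_add (hD.pow _).integrable (hD.pow _).integrable]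
  exact integral_mono (hD.abs.pow j).integrable ((hD.pow 2).integrable.add (hD.pow _).integrable)
    fun ω => abs_pow_le_sq_add_pow_two_mul hj _

end IsCenteredAdditive

lemma tendsto_sum_abs_mul_of_eventually_abs_le {ι : Type*} {l : Filter ι} {S : ι → Finset ℕ}
    {a b : ι → ℕ → ℝ} {C : ℝ} (ha : ∀ ε > 0, ∀ᶠ i in l, ∀ k ∈ S i, |a i k| ≤ ε)
    (hb : ∀ i, ∑ k ∈ S i, |b i k| ≤ C) :
    Tendsto (fun i => ∑ k ∈ S i, |a i k * b i k|) l (𝓝 0) := by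
  rw [Metric.tendsto_nhds]
  intro ε hε
  have hδ : 0 < ε / (|C| + 1) := by positivity
  filter_upwards [ha _ hδ] with i hi
  rw [Real.dist_eq, sub_zero, abs_of_nonneg (Finset.sum_nonneg fun _ _ => abs_nonneg _)]
  calc ∑ k ∈ S i, |a i k * b i k| ≤ ∑ k ∈ S i, ε / (|C| + 1) * |b i k| :=
        Finset.sum_le_sum fun k hk => by rw [abs_mul]; gcongr; exact hi k hk
    _ = ε / (|C| + 1) * ∑ k ∈ S i, |b i k| := (Finset.mul_sum ..).symm
    _ ≤ ε / (|C| + 1) * |C| := by gcongr; exact (hb i).trans (le_abs_self C)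
    _ < ε / (|C| + 1) * (|C| + 1) := by gcongr; exact lt_add_one _
    _ = ε := div_mul_cancel₀ _ (by positivity)

section Truncation

variable {Ω : Type*} {mΩ : MeasurableSpace Ω} {μ : Measure Ω} {Z : Ω → ℝ}

lemma abs_integral_pow_le (Z : Ω → ℝ) (j : ℕ) : |∫ ω, Z ω ^ j ∂μ| ≤ ∫ ω, |Z ω| ^ j ∂μ := by
  simpa only [abs_pow] using abs_integral_le_integral_abs (f := fun ω => Z ω ^ j) (μ := μ)

lemma HasAllMoments.integral_abs_pow_le_add_sqrt [IsProbabilityMeasure μ] (hZ : HasAllMoments Z μ)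
    (hZm : Measurable Z) (j : ℕ) {η : ℝ} (hη : 0 ≤ η) :
    ∫ ω, |Z ω| ^ j ∂μ ≤ η ^ j + √(∫ ω, Z ω ^ (2 * j) ∂μ) * √(μ.real {ω | η ≤ |Z ω|}) := by
  have hA : MeasurableSet {ω | η ≤ |Z ω|} := measurableSet_le measurable_const hZm.abs
  set W : Ω → ℝ := {ω | η ≤ |Z ω|}.indicator fun _ => 1 with hW
  have hWall : HasAllMoments W μ := (HasAllMoments.const 1).indicator hA
  have hint : Integrable (fun ω => |Z ω ^ j * W ω|) μ := ((hZ.pow j).mul hWall).abs.integrable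
  have hW_sq : ∫ ω, W ω ^ 2 ∂μ = μ.real {ω | η ≤ |Z ω|} := by
    rw [← integral_indicator_one hA]
    congr 1 with ω
    by_cases hω : η ≤ |Z ω| <;> simp [hW, hω]
  have hsplit (ω : Ω) : |Z ω| ^ j ≤ η ^ j + |Z ω ^ j * W ω| := by
    by_cases hω : η ≤ |Z ω|
    · simp [hW, hω, abs_pow, pow_nonneg hη]
    · simpa [hW, hω] using pow_le_pow_left₀ (abs_nonneg _) (not_le.1 hω).le j
  calc ∫ ω, |Z ω| ^ j ∂μ ≤ ∫ ω, (η ^ j + |Z ω ^ j * W ω|) ∂μ :=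
        integral_mono (hZ.abs.pow j).integrable ((integrable_const _).add hint) hsplit
    _ = η ^ j + ∫ ω, |Z ω ^ j * W ω| ∂μ := by
        rw [integral_add (integrable_const _) hint, integral_const, probReal_univ, one_smul]
    _ ≤ _ := by
        gcongr
        simpa only [hW_sq, ← pow_mul, mul_comm j 2] using
          integral_abs_mul_le_sqrt_mul_sqrt (hZ.pow j).memLp_two hWall.memLp_two

end Truncation

namespace IsCenteredAdditive

variable {Ω : Type*} {mΩ : MeasurableSpace Ω} {μ : Measure Ω} [IsProbabilityMeasure μ]
  {X : ℝ≥0 → Ω → ℝ} {ℱ : Filtration ℝ≥0 mΩ} {s t : ℝ≥0} {κ : ℝ≥0 → ℕ → ℝ}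

lemma integral_sub_pow_le_of_le (hX : IsCenteredAdditive X ℱ μ) {u : ℝ≥0} (hs : s ≤ u)
    (ht : t ≤ u) {n : ℕ} (hn : Even n) (hn0 : n ≠ 0) :
    ∫ ω, (X t ω - X s ω) ^ n ∂μ ≤ 2 ^ (n - 1) * ∫ ω, X u ω ^ n ∂μ := by
  wlog hst : s ≤ t generalizing s t
  · simpa only [← neg_sub (X s _), hn.neg_pow] using this ht hs (le_of_not_ge hst)
  · refine (hX.integral_sub_pow_le_of_even hst hn hn0).trans ?_
    gcongr
    exact (sub_le_self _ (integral_nonneg fun ω => hn.pow_nonneg (X s ω))).trans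
      (hX.monotone_integral_pow_of_even hn hn0 ht)

lemma tendsto_integral_abs_sub_pow (hX : IsCenteredAdditive X ℱ μ) (t : ℝ≥0) {j : ℕ}
    (hj : j ≠ 0) : Tendsto (fun r => ∫ ω, |X r ω - X t ω| ^ j ∂μ) (𝓝 t) (𝓝 0) := by
  set K := 2 ^ (2 * j - 1) * ∫ ω, X (t + 1) ω ^ (2 * j) ∂μ
  have hK : ∀ᶠ r in 𝓝 t, ∫ ω, (X r ω - X t ω) ^ (2 * j) ∂μ ≤ K := by
    filter_upwards [gt_mem_nhds (show t < t + 1 by simp)] with r hr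
    exact hX.integral_sub_pow_le_of_le le_self_add hr.le (even_two_mul j) (by omega)
  rw [Metric.tendsto_nhds]
  intro ε hε
  obtain ⟨η, hη, hη0⟩ : ∃ η : ℝ, η ^ j < ε / 2 ∧ 0 < η :=
    ((((continuous_pow j).tendsto' (0 : ℝ) 0 (zero_pow hj)).eventually
      (gt_mem_nhds (half_pos hε))).filter_mono nhdsWithin_le_nhds |>.and
        (self_mem_nhdsWithin (s := Set.Ioi 0))).exists
  have hprob : Tendsto (fun r => √K * √(μ.real {ω | η ≤ |X r ω - X t ω|})) (𝓝 t) (𝓝 0) := by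
    have := ((ENNReal.tendsto_toReal ENNReal.zero_ne_top).comp (hX.tendsto_measure t hη0)).sqrt
    simpa [Measure.real] using this.const_mul √K
  filter_upwards [hprob.eventually (gt_mem_nhds (half_pos hε)), hK] with r hr hrK
  rw [Real.dist_eq, sub_zero, abs_of_nonneg (integral_nonneg fun _ => by positivity)]
  calc ∫ ω, |X r ω - X t ω| ^ j ∂μ
      ≤ η ^ j + √(∫ ω, (X r ω - X t ω) ^ (2 * j) ∂μ) * √(μ.real {ω | η ≤ |X r ω - X t ω|}) :=
        (hX.hasAllMoments_sub t r).integral_abs_pow_le_add_sqrt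
          ((hX.measurable r).sub (hX.measurable t)) j hη0.le
    _ ≤ η ^ j + √K * √(μ.real {ω | η ≤ |X r ω - X t ω|}) := by gcongr
    _ < ε := by linarith

/-! ### Cumulants of the increments -/

lemma abs_cumulant_sub_le (hX : IsCenteredAdditive X ℱ μ) (hκ : ∀ t, HasCumulants (X t) (κ t) μ)
    (s t : ℝ≥0) (m : ℕ) :
    |κ t (m + 1) - κ s (m + 1)| ≤ ∫ ω, |X t ω - X s ω| ^ (m + 1) ∂μ +
      ∑ i ∈ Finset.range m, (m.choose (i + 1) : ℝ) * (∫ ω, |X t ω - X s ω| ^ (i + 1) ∂μ) *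
        |κ t (m - i) - κ s (m - i)| := by
  wlog hst : s ≤ t generalizing s t
  · simpa only [abs_sub_comm] using this t s (le_of_not_ge hst)
  have hrec := (hX.hasCumulants_sub hκ hst).integral_pow_succ_sub m
  simp only [Pi.sub_apply] at hrec
  rw [← sub_sub_cancel (∫ ω, (X t ω - X s ω) ^ (m + 1) ∂μ) (κ t (m + 1) - κ s (m + 1)), hrec]
  refine (abs_sub _ _).trans (add_le_add (abs_integral_pow_le _ _) ?_)
  refine (Finset.abs_sum_le_sum_abs _ _).trans (Finset.sum_le_sum fun i _ => ?_)
  rw [abs_mul, abs_mul, Nat.abs_cast]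
  gcongr
  exact abs_integral_pow_le _ _

lemma continuous_cumulant (hX : IsCenteredAdditive X ℱ μ)
    (hκ : ∀ t, HasCumulants (X t) (κ t) μ) {j : ℕ} (hj : j ≠ 0) : Continuous fun t => κ t j := by
  induction j using Nat.strong_induction_on with
  | _ j ih =>
    obtain ⟨m, rfl⟩ := Nat.exists_eq_succ_of_ne_zero hj
    refine continuous_iff_continuousAt.2 fun t => tendsto_iff_norm_sub_tendsto_zero.2 ?_
    refine squeeze_zero (fun _ => norm_nonneg _) (fun r => hX.abs_cumulant_sub_le hκ t r m) ?_
    rw [← add_zero (0 : ℝ)]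
    refine (hX.tendsto_integral_abs_sub_pow t hj).add ?_
    rw [show (0 : ℝ) = ∑ i ∈ Finset.range m, (m.choose (i + 1) : ℝ) * 0 * 0 by simp]
    refine tendsto_finsetSum _ fun i hi => ?_
    have him := Finset.mem_range.1 hi
    exact ((hX.tendsto_integral_abs_sub_pow t i.succ_ne_zero).const_mul _).mul
      (tendsto_iff_norm_sub_tendsto_zero.1 ((ih (m - i) (by omega) (by omega)).tendsto t))

lemma eventually_abs_incr_cumulant_le (hX : IsCenteredAdditive X ℱ μ)
    (hκ : ∀ t, HasCumulants (X t) (κ t) μ) (hst : s ≤ t) {j : ℕ} (hj : j ≠ 0) {ε : ℝ}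
    (hε : 0 < ε) :
    ∀ᶠ N in atTop, ∀ k ∈ Finset.range (N + 1), |incr (κ · j) s t N k| ≤ ε := by
  obtain ⟨δ, hδ, hunif⟩ := Metric.uniformContinuousOn_iff.1
    ((isCompact_Icc (a := (0 : ℝ≥0)) (b := t)).uniformContinuousOn_of_continuous
      (hX.continuous_cumulant hκ hj).continuousOn) ε hε
  filter_upwards [eventually_dist_unifPartition_lt s t hδ] with N hN k hk
  have hk := Finset.mem_range.1 hk
  have := hunif _ ⟨zero_le, unifPartition_le hst hk.le⟩ _ ⟨zero_le, unifPartition_le hst hk⟩ (hN k)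
  rw [dist_comm, Real.dist_eq] at this
  exact this.le

lemma exists_sum_abs_integral_incr_pow_le (hX : IsCenteredAdditive X ℱ μ) (hst : s ≤ t) (m : ℕ) :
    ∃ C : ℝ, ∀ N, ∑ k ∈ Finset.range (N + 1), |∫ ω, incr (X · ω) s t N k ^ (m + 1) ∂μ| ≤ C := by
  rcases m with _ | m
  · have (N k : ℕ) : ∫ ω, incr (X · ω) s t N k ∂μ = 0 := hX.integral_sub_eq_zero _ _
    exact ⟨0, by simp [this]⟩
  · obtain ⟨C, hC⟩ := hX.exists_sum_integral_abs_incr_pow_le hst (Nat.le_add_left 2 m)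
    exact ⟨C, fun N => (Finset.sum_le_sum fun k _ => abs_integral_pow_le _ _).trans (hC N)⟩

/-- In the moment–cumulant relation for `incr (X · ω) s t N k` all terms but `κ (m + 1)` contain a
further cumulant, which is uniformly small, and a moment, which is summable over `k`. -/
lemma tendsto_sum_abs_integral_incr_pow_sub (hX : IsCenteredAdditive X ℱ μ)
    (hκ : ∀ t, HasCumulants (X t) (κ t) μ) (hst : s ≤ t) (m : ℕ) :
    Tendsto (fun N => ∑ k ∈ Finset.range (N + 1),
      |∫ ω, incr (X · ω) s t N k ^ (m + 1) ∂μ - incr (κ · (m + 1)) s t N k|) atTop (𝓝 0) := by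
  have hterm : ∀ i ∈ Finset.range m, Tendsto (fun N => (m.choose (i + 1) : ℝ) *
      ∑ k ∈ Finset.range (N + 1), |incr (κ · (m - i)) s t N k *
        ∫ ω, incr (X · ω) s t N k ^ (i + 1) ∂μ|) atTop (𝓝 0) := fun i hi => by
    obtain ⟨C, hC⟩ := hX.exists_sum_abs_integral_incr_pow_le hst i
    have hmi : m - i ≠ 0 := Nat.sub_ne_zero_of_lt (Finset.mem_range.1 hi)
    simpa using (tendsto_sum_abs_mul_of_eventually_abs_le
      (fun ε hε => hX.eventually_abs_incr_cumulant_le hκ hst hmi hε) hC).const_mul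
        (m.choose (i + 1) : ℝ)
  refine squeeze_zero (fun _ => Finset.sum_nonneg fun _ _ => abs_nonneg _) (fun N => ?_)
    (by simpa using tendsto_finsetSum _ hterm)
  simp only [Finset.mul_sum]
  rw [Finset.sum_comm]
  refine Finset.sum_le_sum fun k _ => ?_
  have hrec : ∫ ω, incr (X · ω) s t N k ^ (m + 1) ∂μ - incr (κ · (m + 1)) s t N k = _ :=
    (hX.hasCumulants_sub hκ (unifPartition_mono k.le_succ)).integral_pow_succ_sub m
  rw [hrec]
  refine (Finset.abs_sum_le_sum_abs _ _).trans (Finset.sum_le_sum fun i _ => le_of_eq ?_)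
  simp only [abs_mul, Nat.abs_cast, mul_assoc]
  rw [mul_comm |integral _ _|]
  rfl

lemma tendsto_sum_integral_incr_pow (hX : IsCenteredAdditive X ℱ μ)
    (hκ : ∀ t, HasCumulants (X t) (κ t) μ) (hst : s ≤ t) (m : ℕ) :
    Tendsto (fun N => ∑ k ∈ Finset.range (N + 1), ∫ ω, incr (X · ω) s t N k ^ (m + 1) ∂μ) atTop
      (𝓝 (κ t (m + 1) - κ s (m + 1))) := by
  refine tendsto_iff_norm_sub_tendsto_zero.2 (squeeze_zero (fun _ => norm_nonneg _) (fun N => ?_)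
    (hX.tendsto_sum_abs_integral_incr_pow_sub hκ hst m))
  have htel : κ t (m + 1) - κ s (m + 1) =
      ∑ k ∈ Finset.range (N + 1), incr (κ · (m + 1)) s t N k := by
    simp only [incr]
    rw [Finset.sum_range_sub (fun k => κ (unifPartition s t N k) (m + 1)), unifPartition_last hst,
      unifPartition_zero]
  rw [htel, ← Finset.sum_sub_distrib]
  exact norm_sum_le _ _

lemma eventually_abs_integral_incr_pow_le (hX : IsCenteredAdditive X ℱ μ)
    (hκ : ∀ t, HasCumulants (X t) (κ t) μ) (hst : s ≤ t) (m : ℕ) {ε : ℝ} (hε : 0 < ε) :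
    ∀ᶠ N in atTop, ∀ k ∈ Finset.range (N + 1),
      |∫ ω, incr (X · ω) s t N k ^ (m + 1) ∂μ| ≤ ε := by
  filter_upwards [hX.eventually_abs_incr_cumulant_le hκ hst m.succ_ne_zero (half_pos hε),
    (hX.tendsto_sum_abs_integral_incr_pow_sub hκ hst m).eventually (gt_mem_nhds (half_pos hε))]
    with N hcum hsum k hk
  have herr := (Finset.single_le_sum (f := fun k =>
    |∫ ω, incr (X · ω) s t N k ^ (m + 1) ∂μ - incr (κ · (m + 1)) s t N k|)
    (fun _ _ => abs_nonneg _) hk).trans hsum.le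
  have := abs_sub_abs_le_abs_sub (∫ ω, incr (X · ω) s t N k ^ (m + 1) ∂μ)
    (incr (κ · (m + 1)) s t N k)
  linarith [hcum k hk]

lemma tendsto_sum_sq_integral_incr_pow (hX : IsCenteredAdditive X ℱ μ)
    (hκ : ∀ t, HasCumulants (X t) (κ t) μ) (hst : s ≤ t) (m : ℕ) :
    Tendsto (fun N => ∑ k ∈ Finset.range (N + 1), (∫ ω, incr (X · ω) s t N k ^ (m + 1) ∂μ) ^ 2)
      atTop (𝓝 0) := by
  obtain ⟨C, hC⟩ := hX.exists_sum_abs_integral_incr_pow_le hst m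
  simpa only [← sq, abs_sq] using tendsto_sum_abs_mul_of_eventually_abs_le
    (fun ε hε => hX.eventually_abs_integral_incr_pow_le hκ hst m hε) hC

end IsCenteredAdditive

/-! ### Moments of power sums -/

lemma sum_le_prod_one_add {ι : Type*} (S : Finset ι) {f : ι → ℝ} (hf : ∀ i ∈ S, 0 ≤ f i) :
    ∑ i ∈ S, f i ≤ ∏ i ∈ S, (1 + f i) := by
  classical
  suffices 1 + ∑ i ∈ S, f i ≤ ∏ i ∈ S, (1 + f i) by linarith
  induction S using Finset.induction_on with
  | empty => simp
  | insert a S ha ih =>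
    have ih := ih fun i hi => hf i (Finset.mem_insert_of_mem hi)
    have hfa := hf a (Finset.mem_insert_self a S)
    have hS := Finset.sum_nonneg fun i hi => hf i (Finset.mem_insert_of_mem hi)
    rw [Finset.sum_insert ha, Finset.prod_insert ha]
    nlinarith

namespace IsCenteredAdditive

variable {Ω : Type*} {mΩ : MeasurableSpace Ω} {μ : Measure Ω} {X : ℝ≥0 → Ω → ℝ}
  {ℱ : Filtration ℝ≥0 mΩ} {s t : ℝ≥0}

lemma measurable_incr (hX : IsCenteredAdditive X ℱ μ) {N k m : ℕ} (hkm : k < m) :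
    Measurable[ℱ (unifPartition s t N m)] (fun ω => incr (X · ω) s t N k) :=
  (hX.measurable_of_le (unifPartition_mono (Nat.succ_le_of_lt hkm))).sub
    (hX.measurable_of_le (unifPartition_mono hkm.le))

variable [IsProbabilityMeasure μ]

lemma integral_prod_comp_incr (hX : IsCenteredAdditive X ℱ μ) {φ : ℝ → ℝ} (hφ : Measurable φ)
    (s t : ℝ≥0) (N m : ℕ) :
    ∫ ω, ∏ k ∈ Finset.range m, φ (incr (X · ω) s t N k) ∂μ =
      ∏ k ∈ Finset.range m, ∫ ω, φ (incr (X · ω) s t N k) ∂μ := by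
  induction m with
  | zero => simp
  | succ m ih =>
    have hmeas : Measurable[ℱ (unifPartition s t N m)]
        fun ω => ∏ k ∈ Finset.range m, φ (incr (X · ω) s t N k) :=
      Finset.measurable_fun_prod _ fun k hk =>
        hφ.comp (hX.measurable_incr (Finset.mem_range.1 hk))
    simp only [Finset.prod_range_succ, ← ih]
    exact hX.integral_mul_comp_sub (unifPartition_mono m.le_succ) hmeas hφ

lemma hasAllMoments_incrSum_abs_pow (hX : IsCenteredAdditive X ℱ μ) (s t : ℝ≥0) (N j : ℕ) :
    HasAllMoments (fun ω => incrSum (|·| ^ j) (X · ω) s t N) μ :=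
  HasAllMoments.sum _ fun k _ => (hX.hasAllMoments_incr s t N k).abs.pow j

lemma hasAllMoments_incrSum_pow (hX : IsCenteredAdditive X ℱ μ) (s t : ℝ≥0) (N j : ℕ) :
    HasAllMoments (fun ω => incrSum (· ^ j) (X · ω) s t N) μ :=
  HasAllMoments.sum _ fun k _ => (hX.hasAllMoments_incr s t N k).pow j

lemma integral_one_add_abs_incr_pow_pow (hX : IsCenteredAdditive X ℱ μ) (s t : ℝ≥0)
    (N k j p : ℕ) :
    ∫ ω, (1 + |incr (X · ω) s t N k| ^ j) ^ p ∂μ = 1 + ∑ i ∈ Finset.range p,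
      (p.choose (i + 1) : ℝ) * ∫ ω, |incr (X · ω) s t N k| ^ (j * (i + 1)) ∂μ := by
  have hD := (hX.hasAllMoments_incr s t N k).abs
  have hbinom (ω : Ω) : (1 + |incr (X · ω) s t N k| ^ j) ^ p =
      ∑ i ∈ Finset.range (p + 1), (p.choose i : ℝ) * |incr (X · ω) s t N k| ^ (j * i) := by
    simp [add_comm (1 : ℝ), add_pow, pow_mul, mul_comm]
  simp only [hbinom]
  rw [integral_finsetSum _ fun i _ => (hD.pow _).integrable.const_mul _]
  simp [integral_const_mul, Finset.sum_range_succ', add_comm]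

/-- The `p`-th power of `∏ k, (1 + |D k| ^ j)` dominates that of `∑ k, |D k| ^ j`, and its
expectation factorises. -/
lemma exists_integral_incrSum_abs_pow_pow_le (hX : IsCenteredAdditive X ℱ μ) (hst : s ≤ t) {j : ℕ}
    (hj : 2 ≤ j) (p : ℕ) :
    ∃ C : ℝ, ∀ N, ∫ ω, incrSum (|·| ^ j) (X · ω) s t N ^ p ∂μ ≤ C := by
  have hpow (i : ℕ) : 2 ≤ j * (i + 1) := hj.trans (Nat.le_mul_of_pos_right j i.succ_pos)
  choose C hC using fun i => hX.exists_sum_integral_abs_incr_pow_le hst (hpow i)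
  refine ⟨Real.exp (∑ i ∈ Finset.range p, (p.choose (i + 1) : ℝ) * C i), fun N => ?_⟩
  have hfac : HasAllMoments (fun ω => ∏ k ∈ Finset.range (N + 1),
      (1 + |incr (X · ω) s t N k| ^ j) ^ p) μ :=
    HasAllMoments.prod _ fun k _ =>
      ((HasAllMoments.const 1).add ((hX.hasAllMoments_incr s t N k).abs.pow j)).pow p
  calc ∫ ω, incrSum (|·| ^ j) (X · ω) s t N ^ p ∂μ
      ≤ ∫ ω, ∏ k ∈ Finset.range (N + 1), (1 + |incr (X · ω) s t N k| ^ j) ^ p ∂μ := by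
        refine integral_mono ((hX.hasAllMoments_incrSum_abs_pow s t N j).pow p).integrable
          hfac.integrable fun ω => ?_
        simp only [Finset.prod_pow]
        exact pow_le_pow_left₀ (Finset.sum_nonneg fun _ _ => by positivity)
          (sum_le_prod_one_add _ fun _ _ => by positivity) p
    _ = ∏ k ∈ Finset.range (N + 1), (1 + ∑ i ∈ Finset.range p,
          (p.choose (i + 1) : ℝ) * ∫ ω, |incr (X · ω) s t N k| ^ (j * (i + 1)) ∂μ) := by
        rw [hX.integral_prod_comp_incr (φ := fun x => (1 + |x| ^ j) ^ p) (by fun_prop)]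
        simp only [hX.integral_one_add_abs_incr_pow_pow]
    _ ≤ Real.exp (∑ k ∈ Finset.range (N + 1), ∑ i ∈ Finset.range p,
          (p.choose (i + 1) : ℝ) * ∫ ω, |incr (X · ω) s t N k| ^ (j * (i + 1)) ∂μ) :=
        Real.prod_one_add_le_exp_sum _ fun _ => Finset.sum_nonneg fun _ _ =>
          mul_nonneg (by positivity) (integral_nonneg fun _ => by positivity)
    _ ≤ Real.exp (∑ i ∈ Finset.range p, (p.choose (i + 1) : ℝ) * C i) := by
        rw [Finset.sum_comm]
        simp only [← Finset.mul_sum]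
        gcongr with i
        exact hC i N

lemma lintegral_jumpSum_enorm_pow_lt_top (hX : IsCenteredAdditive X ℱ μ) (hst : s ≤ t) {j : ℕ}
    (hj : 2 ≤ j) (p : ℕ) : ∫⁻ ω, jumpSum (fun x => ‖x ^ j‖ₑ) (X · ω) s t ^ p ∂μ < ⊤ := by
  obtain ⟨C, hC⟩ := hX.exists_integral_incrSum_abs_pow_pow_le hst hj p
  have hsum (N : ℕ) (ω : Ω) : incrSum (fun x => ‖x ^ j‖ₑ) (X · ω) s t N ^ p =
      ENNReal.ofReal (incrSum (|·| ^ j) (X · ω) s t N ^ p) := by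
    have hnn : 0 ≤ incrSum (|·| ^ j) (X · ω) s t N := Finset.sum_nonneg fun _ _ => by positivity
    rw [ENNReal.ofReal_pow hnn]
    simp only [incrSum, Real.enorm_eq_ofReal_abs, abs_pow]
    rw [ENNReal.ofReal_sum_of_nonneg fun _ _ => by positivity]
  have hfatou (ω : Ω) : jumpSum (fun x => ‖x ^ j‖ₑ) (X · ω) s t ^ p ≤
      liminf (fun N => ENNReal.ofReal (incrSum (|·| ^ j) (X · ω) s t N ^ p)) atTop := by
    simp only [← hsum]
    have hpow : Monotone fun x : ENNReal => x ^ p := fun _ _ h => pow_le_pow_left' h p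
    refine (hpow ((hX.isCadlag ω).jumpSum_le_liminf_incrSum hst (by fun_prop) ?_)).trans_eq
      (hpow.map_liminf_of_continuousAt _ (ENNReal.continuous_pow p).continuousAt)
    simp [show j ≠ 0 by lia]
  have hmom (N : ℕ) := (hX.hasAllMoments_incrSum_abs_pow s t N j).pow p
  calc ∫⁻ ω, jumpSum (fun x => ‖x ^ j‖ₑ) (X · ω) s t ^ p ∂μ
      ≤ ∫⁻ ω, liminf (fun N => ENNReal.ofReal (incrSum (|·| ^ j) (X · ω) s t N ^ p)) atTop ∂μ :=
        lintegral_mono hfatou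
    _ ≤ liminf (fun N => ∫⁻ ω, ENNReal.ofReal (incrSum (|·| ^ j) (X · ω) s t N ^ p) ∂μ) atTop :=
        lintegral_liminf_le' fun N => (hmom N).aestronglyMeasurable.aemeasurable.ennreal_ofReal
    _ ≤ ENNReal.ofReal C := by
        refine liminf_le_of_frequently_le' (.of_forall fun N => ?_)
        rw [← ofReal_integral_eq_lintegral_ofReal (hmom N).integrable (.of_forall fun ω =>
          pow_nonneg (Finset.sum_nonneg fun _ _ => by positivity) p)]
        exact ENNReal.ofReal_le_ofReal (hC N)
    _ < ⊤ := ENNReal.ofReal_lt_top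

lemma ae_summableJumps (hX : IsCenteredAdditive X ℱ μ) (hst : s ≤ t) {j : ℕ} (hj : 2 ≤ j) :
    ∀ᵐ ω ∂μ, SummableJumps j (X · ω) s t := by
  have hfin := hX.lintegral_jumpSum_enorm_pow_lt_top hst hj 1
  simp only [pow_one] at hfin
  have hmeas := measurable_jumpSum_ennreal (h := fun x => ‖x ^ j‖ₑ) (by fun_prop)
    (by simp [show j ≠ 0 by lia]) hst (fun u _ => hX.measurable u) hX.isCadlag
  filter_upwards [ae_lt_top hmeas hfin.ne] with ω hω
  simpa only [SummableJumps, Real.norm_eq_abs, abs_pow] using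
    (tsum_enorm_ne_top_iff_summable.1 hω.ne).norm

lemma hasAllMoments_jumpSum (hX : IsCenteredAdditive X ℱ μ) (hst : s ≤ t) {j : ℕ} (hj : 2 ≤ j)
    {g : ℝ → ℝ} (hg : Continuous g) (hgj : ∀ x, |g x| ≤ |x ^ j|) :
    HasAllMoments (fun ω => jumpSum g (X · ω) s t) μ := by
  have hg0 : g 0 = 0 := by simpa [show j ≠ 0 by lia] using hgj 0
  have hmeas := measurable_jumpSum hg hg0 hst (fun u _ => hX.measurable u) hX.isCadlag
  refine .of_integrable_abs_pow hmeas.aestronglyMeasurable fun p =>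
    ⟨(hmeas.abs.pow_const p).aestronglyMeasurable, ?_⟩
  refine (lintegral_mono fun ω => ?_).trans_lt (hX.lintegral_jumpSum_enorm_pow_lt_top hst hj p)
  rw [enorm_pow, ← Real.norm_eq_abs, enorm_norm]
  gcongr
  exact enorm_tsum_le_tsum_enorm.trans (ENNReal.tsum_le_tsum fun u =>
    enorm_le_iff_norm_le.2 (hgj _))

lemma hasAllMoments_jumpSum_pow (hX : IsCenteredAdditive X ℱ μ) (hst : s ≤ t) {j : ℕ}
    (hj : 2 ≤ j) : HasAllMoments (fun ω => jumpSum (· ^ j) (X · ω) s t) μ :=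
  hX.hasAllMoments_jumpSum hst hj (by fun_prop) fun _ => le_rfl

end IsCenteredAdditive

/-! ### Convergence in mean square -/

section MeanSquare

variable {Ω : Type*} {mΩ : MeasurableSpace Ω} {μ : Measure Ω}

lemma HasAllMoments.integral_pow_le_of_abs_le_add [IsFiniteMeasure μ] {Z V W : Ω → ℝ}
    (hZ : HasAllMoments Z μ) (hV : HasAllMoments V μ) (hW : HasAllMoments W μ)
    (h : ∀ ω, |Z ω| ≤ |V ω| + |W ω|) {p : ℕ} (hp : Even p) :
    ∫ ω, Z ω ^ p ∂μ ≤ 2 ^ (p - 1) * (∫ ω, V ω ^ p ∂μ + ∫ ω, W ω ^ p ∂μ) := by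
  rw [← integral_add (hV.pow p).integrable (hW.pow p).integrable, ← integral_const_mul]
  refine integral_mono (hZ.pow p).integrable (((hV.pow p).add (hW.pow p)).integrable.const_mul _)
    fun ω => ?_
  calc Z ω ^ p = |Z ω| ^ p := (hp.pow_abs _).symm
    _ ≤ (|V ω| + |W ω|) ^ p := by gcongr; exact h ω
    _ ≤ 2 ^ (p - 1) * (|V ω| ^ p + |W ω| ^ p) := add_pow_le (abs_nonneg _) (abs_nonneg _) p
    _ = 2 ^ (p - 1) * (V ω ^ p + W ω ^ p) := by rw [hp.pow_abs, hp.pow_abs]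

lemma tendsto_div_one_add_abs_add_abs_of_isLittleO {ι : Type*} {l : Filter ι} {g r : ι → ℝ}
    (h : g =o[l] r) : Tendsto (fun i => g i / (1 + (|g i| + |r i|))) l (𝓝 0) := by
  rw [← Asymptotics.isLittleO_one_iff ℝ, Asymptotics.isLittleO_iff]
  intro c hc
  filter_upwards [Asymptotics.isLittleO_iff.1 h hc] with i hi
  rw [norm_div, Real.norm_of_nonneg (by positivity : 0 ≤ 1 + (|g i| + |r i|)), norm_one, mul_one,
    div_le_iff₀ (by positivity)]
  rw [Real.norm_eq_abs (r i)] at hi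
  nlinarith [abs_nonneg (g i)]

lemma tendsto_integral_mul_sq_of_ae_tendsto_zero [IsFiniteMeasure μ] {W H : ℕ → Ω → ℝ} {C : ℝ}
    (hW : ∀ N, AEStronglyMeasurable (W N) μ) (hW1 : ∀ N ω, |W N ω| ≤ 1)
    (hW0 : ∀ᵐ ω ∂μ, Tendsto (W · ω) atTop (𝓝 0))
    (hH : ∀ N, HasAllMoments (H N) μ) (hHC : ∀ N, ∫ ω, H N ω ^ 4 ∂μ ≤ C) :
    Tendsto (fun N => ∫ ω, (W N ω * H N ω) ^ 2 ∂μ) atTop (𝓝 0) := by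
  have hWall (N : ℕ) : HasAllMoments (W N) μ :=
    (HasAllMoments.const 1).of_le (hW N) fun ω => by simpa using hW1 N ω
  have hW4 : Tendsto (fun N => ∫ ω, (W N ω ^ 2) ^ 2 ∂μ) atTop (𝓝 0) := by
    simpa using tendsto_integral_of_dominated_convergence (f := fun _ => (0 : ℝ)) (fun _ => 1)
      (fun N => (((hWall N).pow 2).pow 2).aestronglyMeasurable) (integrable_const 1)
      (fun N => .of_forall fun ω => by
        simpa only [norm_pow] using pow_le_one₀ (by positivity)
          (pow_le_one₀ (norm_nonneg (W N ω)) (hW1 N ω)))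
      (hW0.mono fun ω hω => by simpa using (hω.pow 2).pow 2)
  refine squeeze_zero (fun N => integral_nonneg fun ω => sq_nonneg _) (fun N => ?_)
    (by simpa only [Real.sqrt_zero, zero_mul] using hW4.sqrt.mul_const √C)
  calc ∫ ω, (W N ω * H N ω) ^ 2 ∂μ = ∫ ω, |W N ω ^ 2 * H N ω ^ 2| ∂μ := by
        simp only [← mul_pow, abs_sq]
    _ ≤ √(∫ ω, (W N ω ^ 2) ^ 2 ∂μ) * √(∫ ω, (H N ω ^ 2) ^ 2 ∂μ) :=
        integral_abs_mul_le_sqrt_mul_sqrt ((hWall N).pow 2).memLp_two ((hH N).pow 2).memLp_two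
    _ ≤ √(∫ ω, (W N ω ^ 2) ^ 2 ∂μ) * √C := by
        gcongr
        simpa only [← pow_mul] using hHC N

/-- Write `G N = (G N / H N) * H N` with `H N = 1 + (|G N| + |R N|)`: the first factor is bounded by
`1` and tends to `0`, the second one is bounded in `L⁴`. -/
lemma tendsto_integral_sq_of_isLittleO [IsProbabilityMeasure μ] {G R : ℕ → Ω → ℝ} {C C' : ℝ}
    (hG : ∀ N, HasAllMoments (G N) μ) (hR : ∀ N, HasAllMoments (R N) μ)
    (hGR : ∀ᵐ ω ∂μ, (G · ω) =o[atTop] (R · ω))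
    (hGC : ∀ N, ∫ ω, G N ω ^ 4 ∂μ ≤ C) (hRC : ∀ N, ∫ ω, R N ω ^ 4 ∂μ ≤ C') :
    Tendsto (fun N => ∫ ω, G N ω ^ 2 ∂μ) atTop (𝓝 0) := by
  let H (N : ℕ) (ω : Ω) := 1 + (|G N ω| + |R N ω|)
  have hH0 (N : ℕ) (ω : Ω) : 0 < H N ω := by positivity
  have hS (N : ℕ) := (hG N).abs.add (hR N).abs
  have hH (N : ℕ) : HasAllMoments (H N) μ := (HasAllMoments.const 1).add (hS N)
  have hHC (N : ℕ) : ∫ ω, H N ω ^ 4 ∂μ ≤ 8 * (1 + 8 * (C + C')) := by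
    have hp : Even 4 := by decide
    have hHS := (hH N).integral_pow_le_of_abs_le_add (.const 1) (hS N) (fun ω => abs_add_le _ _) hp
    have hSGR := (hS N).integral_pow_le_of_abs_le_add (hG N).abs (hR N).abs
      (fun ω => abs_add_le _ _) hp
    simp only [hp.pow_abs] at hSGR
    norm_num at hHS hSGR
    linarith [hGC N, hRC N]
  have hW1 (N : ℕ) (ω : Ω) : |G N ω / H N ω| ≤ 1 := by
    rw [abs_div, abs_of_pos (hH0 N ω)]
    exact div_le_one_of_le₀ (by dsimp only [H]; linarith [abs_nonneg (R N ω)]) (hH0 N ω).le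
  have hlim := tendsto_integral_mul_sq_of_ae_tendsto_zero
    (fun N => ((hG N).aestronglyMeasurable.aemeasurable.div
      (hH N).aestronglyMeasurable.aemeasurable).aestronglyMeasurable) hW1
    (hGR.mono fun ω hω => tendsto_div_one_add_abs_add_abs_of_isLittleO hω) hH hHC
  simpa only [Pi.div_apply, fun N ω => div_mul_cancel₀ (G N ω) (hH0 N ω).ne'] using hlim

lemma tendsto_integral_mul_of_tendsto_integral_sub_sq {Z : ℕ → Ω → ℝ} {D U : Ω → ℝ}
    (hZ : ∀ N, MemLp (Z N) 2 μ) (hD : MemLp D 2 μ) (hU : MemLp U 2 μ)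
    (h : Tendsto (fun N => ∫ ω, (Z N ω - D ω) ^ 2 ∂μ) atTop (𝓝 0)) :
    Tendsto (fun N => ∫ ω, U ω * Z N ω ∂μ) atTop (𝓝 (∫ ω, U ω * D ω ∂μ)) := by
  have hdiff (N : ℕ) : ∫ ω, U ω * Z N ω ∂μ - ∫ ω, U ω * D ω ∂μ =
      ∫ ω, U ω * (Z N ω - D ω) ∂μ := by
    simp only [mul_sub]
    exact (integral_sub (hU.integrable_mul (hZ N)) (hU.integrable_mul hD)).symm
  rw [tendsto_iff_norm_sub_tendsto_zero]
  refine squeeze_zero (fun N => norm_nonneg _) (fun N => ?_)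
    (by simpa using h.sqrt.const_mul √(∫ ω, U ω ^ 2 ∂μ))
  rw [hdiff]
  exact (norm_integral_le_integral_norm _).trans
    (integral_abs_mul_le_sqrt_mul_sqrt hU ((hZ N).sub hD))

lemma tendsto_integral_sq_of_tendsto_integral_sub_sq {Z : ℕ → Ω → ℝ} {D : Ω → ℝ}
    (hZ : ∀ N, MemLp (Z N) 2 μ) (hD : MemLp D 2 μ)
    (h : Tendsto (fun N => ∫ ω, (Z N ω - D ω) ^ 2 ∂μ) atTop (𝓝 0)) :
    Tendsto (fun N => ∫ ω, Z N ω ^ 2 ∂μ) atTop (𝓝 (∫ ω, D ω ^ 2 ∂μ)) := by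
  have hexpand (N : ℕ) : ∫ ω, Z N ω ^ 2 ∂μ =
      ∫ ω, (Z N ω - D ω) ^ 2 ∂μ + 2 * ∫ ω, D ω * Z N ω ∂μ - ∫ ω, D ω * D ω ∂μ := by
    have hsub : Integrable (fun ω => (Z N ω - D ω) ^ 2) μ := ((hZ N).sub hD).integrable_sq
    have hmul : Integrable (fun ω => 2 * (D ω * Z N ω)) μ :=
      (hD.integrable_mul (hZ N)).const_mul 2
    have hDD : Integrable (fun ω => D ω * D ω) μ := hD.integrable_mul hD
    rw [← integral_const_mul, ← integral_add hsub hmul, ← integral_sub (hsub.fun_add hmul) hDD]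
    congr with ω
    ring
  have hDZ := tendsto_integral_mul_of_tendsto_integral_sub_sq hZ hD hD h
  simp only [hexpand, sq (D _)]
  convert (h.add (hDZ.const_mul 2)).sub_const (∫ ω, D ω * D ω ∂μ) using 2
  ring

end MeanSquare

/-! ### Compensated power sums -/

/-- The sum over the first `m` intervals of `unifPartition s t N` of the `n`-th powers of the
increments of `X`, each compensated by its mean. For `m = N + 1` it approximates the increment of
the `n`-th Teugels martingale over `(s, t]`. -/
noncomputable def compensatedPowerSum {Ω : Type*} {_ : MeasurableSpace Ω} (X : ℝ≥0 → Ω → ℝ)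
    (μ : Measure Ω) (n : ℕ) (s t : ℝ≥0) (N m : ℕ) (ω : Ω) : ℝ :=
  ∑ k ∈ Finset.range m, (incr (X · ω) s t N k ^ n - ∫ ω', incr (X · ω') s t N k ^ n ∂μ)

lemma abs_incrSum_pow_le (f : ℝ≥0 → ℝ) (s t : ℝ≥0) (N n : ℕ) :
    |incrSum (· ^ n) f s t N| ≤ incrSum (|·| ^ n) f s t N := by
  simp only [incrSum, ← abs_pow]
  exact Finset.abs_sum_le_sum_abs _ _

namespace IsCenteredAdditive

variable {Ω : Type*} {mΩ : MeasurableSpace Ω} {μ : Measure Ω} [IsProbabilityMeasure μ]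
  {X : ℝ≥0 → Ω → ℝ} {ℱ : Filtration ℝ≥0 mΩ} {κ : ℝ≥0 → ℕ → ℝ} {s t : ℝ≥0} {A : Set Ω} {n : ℕ}

omit [IsProbabilityMeasure μ] in
lemma setIntegral_mul_comp_incr (hX : IsCenteredAdditive X ℱ μ) {N k : ℕ}
    (hA : MeasurableSet[ℱ (unifPartition s t N k)] A) {U : Ω → ℝ}
    (hU : Measurable[ℱ (unifPartition s t N k)] U) {g : ℝ → ℝ} (hg : Measurable g) :
    ∫ ω in A, U ω * g (incr (X · ω) s t N k) ∂μ =
      (∫ ω in A, U ω ∂μ) * ∫ ω, g (incr (X · ω) s t N k) ∂μ := by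
  simp only [← integral_indicator (ℱ.le _ A hA), Set.indicator_mul_left]
  exact hX.integral_mul_comp_sub (unifPartition_mono k.le_succ) (hU.indicator hA) hg

lemma setIntegral_mul_incr_pow_sub (hX : IsCenteredAdditive X ℱ μ) {N k : ℕ}
    (hA : MeasurableSet[ℱ (unifPartition s t N k)] A) {U : Ω → ℝ}
    (hU : Measurable[ℱ (unifPartition s t N k)] U) :
    ∫ ω in A, U ω * (incr (X · ω) s t N k ^ n - ∫ ω', incr (X · ω') s t N k ^ n ∂μ) ∂μ = 0 := by
  rw [hX.setIntegral_mul_comp_incr hA hU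
    (g := fun x => x ^ n - ∫ ω', incr (X · ω') s t N k ^ n ∂μ) (by fun_prop),
    integral_sub ((hX.hasAllMoments_incr s t N k).pow n).integrable (integrable_const _)]
  simp

lemma setIntegral_incr_pow_sub_sq (hX : IsCenteredAdditive X ℱ μ) {N k : ℕ}
    (hA : MeasurableSet[ℱ (unifPartition s t N k)] A) :
    ∫ ω in A, (incr (X · ω) s t N k ^ n - ∫ ω', incr (X · ω') s t N k ^ n ∂μ) ^ 2 ∂μ =
      μ.real A * (∫ ω, incr (X · ω) s t N k ^ (2 * n) ∂μ -
        (∫ ω, incr (X · ω) s t N k ^ n ∂μ) ^ 2) := by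
  have hD := ((hX.hasAllMoments_incr s t N k).pow n).memLp_two
  have hvar := variance_eq_sub hD
  rw [variance_eq_integral hD.aestronglyMeasurable.aemeasurable] at hvar
  simp only [Pi.pow_apply, ← pow_mul, mul_comm n 2] at hvar
  rw [← hvar]
  simpa using hX.setIntegral_mul_comp_incr hA (measurable_const (a := (1 : ℝ)))
    (g := fun x => (x ^ n - ∫ ω', incr (X · ω') s t N k ^ n ∂μ) ^ 2) (by fun_prop)

lemma hasAllMoments_compensatedPowerSum (hX : IsCenteredAdditive X ℱ μ) (n : ℕ) (s t : ℝ≥0)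
    (N m : ℕ) : HasAllMoments (compensatedPowerSum X μ n s t N m) μ :=
  HasAllMoments.sum _ fun k _ => ((hX.hasAllMoments_incr s t N k).pow n).sub_const _

omit [IsProbabilityMeasure μ] in
lemma measurable_compensatedPowerSum (hX : IsCenteredAdditive X ℱ μ) (n : ℕ) (s t : ℝ≥0)
    (N m : ℕ) :
    Measurable[ℱ (unifPartition s t N m)] (compensatedPowerSum X μ n s t N m) :=
  Finset.measurable_fun_sum _ fun _ hk =>
    ((hX.measurable_incr (Finset.mem_range.1 hk)).pow_const n).sub_const _

lemma setIntegral_compensatedPowerSum (hX : IsCenteredAdditive X ℱ μ)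
    (hA : MeasurableSet[ℱ s] A) (n N m : ℕ) :
    ∫ ω in A, compensatedPowerSum X μ n s t N m ω ∂μ = 0 := by
  simp only [compensatedPowerSum]
  rw [integral_finsetSum _ fun k _ =>
    (((hX.hasAllMoments_incr s t N k).pow n).sub_const _).integrable.integrableOn]
  refine Finset.sum_eq_zero fun k _ => ?_
  simpa using hX.setIntegral_mul_incr_pow_sub (n := n) (ℱ.mono (le_unifPartition k) A hA)
    (measurable_const (a := (1 : ℝ)))

/-- The summands are martingale differences, so the cross terms vanish. -/
lemma setIntegral_compensatedPowerSum_sq (hX : IsCenteredAdditive X ℱ μ)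
    (hA : MeasurableSet[ℱ s] A) (n N m : ℕ) :
    ∫ ω in A, compensatedPowerSum X μ n s t N m ω ^ 2 ∂μ = μ.real A * ∑ k ∈ Finset.range m,
      (∫ ω, incr (X · ω) s t N k ^ (2 * n) ∂μ - (∫ ω, incr (X · ω) s t N k ^ n ∂μ) ^ 2) := by
  induction m with
  | zero => simp [compensatedPowerSum]
  | succ m ih =>
    let M := compensatedPowerSum X μ n s t N m
    let ξ (ω : Ω) := incr (X · ω) s t N m ^ n - ∫ ω', incr (X · ω') s t N m ^ n ∂μ
    have hM : HasAllMoments M μ := hX.hasAllMoments_compensatedPowerSum n s t N m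
    have hξ : HasAllMoments ξ μ := ((hX.hasAllMoments_incr s t N m).pow n).sub_const _
    have hAm : MeasurableSet[ℱ (unifPartition s t N m)] A := ℱ.mono (le_unifPartition m) A hA
    have hcross : ∫ ω in A, 2 * M ω * ξ ω ∂μ = 0 := hX.setIntegral_mul_incr_pow_sub hAm
      ((hX.measurable_compensatedPowerSum n s t N m).const_mul 2)
    have hsq (ω : Ω) : compensatedPowerSum X μ n s t N (m + 1) ω ^ 2 =
        M ω ^ 2 + 2 * M ω * ξ ω + ξ ω ^ 2 := by
      rw [← add_sq, compensatedPowerSum, Finset.sum_range_succ]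
      rfl
    have hMM := (hM.pow 2).integrable.integrableOn (s := A)
    have hMξ := (((HasAllMoments.const 2).mul hM).mul hξ).integrable.integrableOn (s := A)
    have hξξ := (hξ.pow 2).integrable.integrableOn (s := A)
    simp only [hsq]
    rw [integral_add (hMM.fun_add hMξ) hξξ, integral_add hMM hMξ, hcross, add_zero,
      hX.setIntegral_incr_pow_sub_sq hAm, ih, Finset.sum_range_succ, mul_add]

/-! ### Increments of the Teugels martingales -/

lemma tendsto_integral_incrSum_sub_jumpSum_sq (hX : IsCenteredAdditive X ℱ μ) (hst : s ≤ t)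
    (hn : 2 ≤ n) :
    Tendsto (fun N => ∫ ω, (incrSum (· ^ (n + 1)) (X · ω) s t N -
      jumpSum (· ^ (n + 1)) (X · ω) s t) ^ 2 ∂μ) atTop (𝓝 0) := by
  have hn1 : 2 ≤ n + 1 := by lia
  have hp : Even 4 := by decide
  have hG (N : ℕ) := (hX.hasAllMoments_incrSum_pow s t N (n + 1)).sub
    (hX.hasAllMoments_jumpSum_pow hst hn1)
  have hA : HasAllMoments (fun ω => jumpSum (|·| ^ n) (X · ω) s t) μ :=
    hX.hasAllMoments_jumpSum hst hn (by fun_prop) fun x => by simp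
  have hR (N : ℕ) := (hX.hasAllMoments_incrSum_abs_pow s t N n).add hA
  obtain ⟨C, hC⟩ := hX.exists_integral_incrSum_abs_pow_pow_le hst hn1 4
  obtain ⟨C', hC'⟩ := hX.exists_integral_incrSum_abs_pow_pow_le hst hn 4
  have hGC (N : ℕ) : ∫ ω, (incrSum (· ^ (n + 1)) (X · ω) s t N -
      jumpSum (· ^ (n + 1)) (X · ω) s t) ^ 4 ∂μ ≤
        2 ^ 3 * (C + ∫ ω, jumpSum (· ^ (n + 1)) (X · ω) s t ^ 4 ∂μ) := by
    refine ((hG N).integral_pow_le_of_abs_le_add (hX.hasAllMoments_incrSum_abs_pow s t N (n + 1))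
      (hX.hasAllMoments_jumpSum_pow hst hn1) (fun ω => ?_) hp).trans (by gcongr; exact hC N)
    exact (abs_sub _ _).trans
      (add_le_add_left ((abs_incrSum_pow_le _ s t N _).trans (le_abs_self _)) _)
  have hRC (N : ℕ) : ∫ ω, (incrSum (|·| ^ n) (X · ω) s t N +
      jumpSum (|·| ^ n) (X · ω) s t) ^ 4 ∂μ ≤
        2 ^ 3 * (C' + ∫ ω, jumpSum (|·| ^ n) (X · ω) s t ^ 4 ∂μ) :=
    ((hR N).integral_pow_le_of_abs_le_add (hX.hasAllMoments_incrSum_abs_pow s t N n) hA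
      (fun ω => abs_add_le _ _) hp).trans (by gcongr; exact hC' N)
  refine tendsto_integral_sq_of_isLittleO hG hR ?_ hGC hRC
  filter_upwards [hX.ae_summableJumps hst hn] with ω hω
  exact (hX.isCadlag ω).isLittleO_incrSum_sub_jumpSum hst (by lia) hω

lemma tendsto_integral_compensatedPowerSum_sub_sq (hX : IsCenteredAdditive X ℱ μ)
    (hκ : ∀ t, HasCumulants (X t) (κ t) μ) (hst : s ≤ t) (hn : 2 ≤ n) :
    Tendsto (fun N => ∫ ω, (compensatedPowerSum X μ (n + 1) s t N (N + 1) ω -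
      (jumpSum (· ^ (n + 1)) (X · ω) s t - (κ t (n + 1) - κ s (n + 1)))) ^ 2 ∂μ) atTop (𝓝 0) := by
  let c (N : ℕ) : ℝ := ∑ k ∈ Finset.range (N + 1), ∫ ω, incr (X · ω) s t N k ^ (n + 1) ∂μ -
    (κ t (n + 1) - κ s (n + 1))
  have hc : Tendsto c atTop (𝓝 0) := by
    simpa using (hX.tendsto_sum_integral_incr_pow hκ hst n).sub_const (κ t (n + 1) - κ s (n + 1))
  have hlim := ((hX.tendsto_integral_incrSum_sub_jumpSum_sq hst hn).add (hc.pow 2)).const_mul 2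
  have hV := hX.hasAllMoments_jumpSum_pow hst (by lia : 2 ≤ n + 1)
  have hS (N : ℕ) := hX.hasAllMoments_incrSum_pow s t N (n + 1)
  have hM (N : ℕ) := hX.hasAllMoments_compensatedPowerSum (n + 1) s t N (N + 1)
  refine squeeze_zero (fun N => integral_nonneg fun ω => sq_nonneg _) (fun N => ?_)
    (by simpa using hlim)
  have hle := ((hM N).sub (hV.sub_const (κ t (n + 1) - κ s (n + 1)))).integral_pow_le_of_abs_le_add
    ((hS N).sub hV) (.const (c N)) (fun ω => ?_) even_two
  · simpa using hle
  · refine le_of_eq_of_le ?_ (abs_sub _ _)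
    simp only [compensatedPowerSum, incrSum, Finset.sum_sub_distrib, c]
    ring_nf

lemma tendsto_setIntegral_compensatedPowerSum_sub_sq (hX : IsCenteredAdditive X ℱ μ)
    (hκ : ∀ t, HasCumulants (X t) (κ t) μ) (hst : s ≤ t) (hn : 2 ≤ n) (A : Set Ω) :
    Tendsto (fun N => ∫ ω in A, (compensatedPowerSum X μ (n + 1) s t N (N + 1) ω -
      (jumpSum (· ^ (n + 1)) (X · ω) s t - (κ t (n + 1) - κ s (n + 1)))) ^ 2 ∂μ) atTop (𝓝 0) := by
  refine squeeze_zero (fun N => integral_nonneg fun ω => sq_nonneg _) (fun N => ?_)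
    (hX.tendsto_integral_compensatedPowerSum_sub_sq hκ hst hn)
  have hM := hX.hasAllMoments_compensatedPowerSum (n + 1) s t N (N + 1)
  have hD := (hX.hasAllMoments_jumpSum_pow hst (by lia : 2 ≤ n + 1)).sub_const
    (κ t (n + 1) - κ s (n + 1))
  exact setIntegral_le_integral ((hM.sub hD).pow 2).integrable (.of_forall fun ω => sq_nonneg _)

lemma setIntegral_jumpSum_sub (hX : IsCenteredAdditive X ℱ μ)
    (hκ : ∀ t, HasCumulants (X t) (κ t) μ) (hst : s ≤ t) (hn : 2 ≤ n)
    (hA : MeasurableSet[ℱ s] A) :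
    ∫ ω in A, (jumpSum (· ^ (n + 1)) (X · ω) s t - (κ t (n + 1) - κ s (n + 1))) ∂μ = 0 := by
  have hD := (hX.hasAllMoments_jumpSum_pow hst (by lia : 2 ≤ n + 1)).sub_const
    (κ t (n + 1) - κ s (n + 1))
  have hlim := tendsto_integral_mul_of_tendsto_integral_sub_sq (μ := μ.restrict A)
    (fun N => (hX.hasAllMoments_compensatedPowerSum (n + 1) s t N (N + 1)).memLp_two.restrict A)
    (hD.memLp_two.restrict A) (memLp_const 1)
    (hX.tendsto_setIntegral_compensatedPowerSum_sub_sq hκ hst hn A)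
  simp only [one_mul, hX.setIntegral_compensatedPowerSum hA] at hlim
  exact tendsto_nhds_unique hlim tendsto_const_nhds

lemma setIntegral_jumpSum_sub_sq (hX : IsCenteredAdditive X ℱ μ)
    (hκ : ∀ t, HasCumulants (X t) (κ t) μ) (hst : s ≤ t) (hn : 2 ≤ n)
    (hA : MeasurableSet[ℱ s] A) :
    ∫ ω in A, (jumpSum (· ^ (n + 1)) (X · ω) s t - (κ t (n + 1) - κ s (n + 1))) ^ 2 ∂μ =
      μ.real A * (κ t (2 * (n + 1)) - κ s (2 * (n + 1))) := by
  have hD := (hX.hasAllMoments_jumpSum_pow hst (by lia : 2 ≤ n + 1)).sub_const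
    (κ t (n + 1) - κ s (n + 1))
  have hlim := tendsto_integral_sq_of_tendsto_integral_sub_sq (μ := μ.restrict A)
    (fun N => (hX.hasAllMoments_compensatedPowerSum (n + 1) s t N (N + 1)).memLp_two.restrict A)
    (hD.memLp_two.restrict A) (hX.tendsto_setIntegral_compensatedPowerSum_sub_sq hκ hst hn A)
  simp only [hX.setIntegral_compensatedPowerSum_sq hA, Finset.sum_sub_distrib] at hlim
  have hsum := (hX.tendsto_sum_integral_incr_pow hκ hst (2 * n + 1)).sub
    (hX.tendsto_sum_sq_integral_incr_pow hκ hst n)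
  rw [sub_zero] at hsum
  exact tendsto_nhds_unique hlim (hsum.const_mul _)

end IsCenteredAdditive

/-! ### Predictable quadratic variation -/

section QuadraticVariation

variable {Ω : Type*} {mΩ : MeasurableSpace Ω} {μ : Measure Ω} [IsFiniteMeasure μ]
  {ι : Type*} [Preorder ι] {ℱ : Filtration ι mΩ} {Y : ι → Ω → ℝ}

lemma martingale_of_forall_setIntegral_sub_eq_zero (hYadp : StronglyAdapted ℱ Y)
    (hY : ∀ t, Integrable (Y t) μ)
    (h : ∀ ⦃s t : ι⦄, s ≤ t → ∀ ⦃A⦄, MeasurableSet[ℱ s] A →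
      ∫ ω in A, (Y t ω - Y s ω) ∂μ = 0) :
    Martingale Y ℱ μ := by
  refine ⟨hYadp, fun s t hst => .symm ?_⟩
  refine ae_eq_condExp_of_forall_setIntegral_eq (ℱ.le s) (hY t)
    (fun _ _ _ => (hY s).integrableOn) (fun A hA _ => ?_) (hYadp s).aestronglyMeasurable
  have hsub := h hst hA
  rw [integral_sub (hY t).integrableOn (hY s).integrableOn] at hsub
  linarith

lemma martingale_sq_sub_of_setIntegral_sub_sq_eq (hY : Martingale Y ℱ μ)
    (hY2 : ∀ t, MemLp (Y t) 2 μ) {G : ι → ℝ}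
    (h : ∀ ⦃s t : ι⦄, s ≤ t → ∀ ⦃A⦄, MeasurableSet[ℱ s] A →
      ∫ ω in A, (Y t ω - Y s ω) ^ 2 ∂μ = μ.real A * (G t - G s)) :
    Martingale (fun t ω => Y t ω ^ 2 - G t) ℱ μ := by
  refine martingale_of_forall_setIntegral_sub_eq_zero
    (fun t => ((hY.stronglyMeasurable t).pow 2).sub stronglyMeasurable_const)
    (fun t => (hY2 t).integrable_sq.sub (integrable_const _)) fun s t hst A hA => ?_
  have hsub : MemLp (Y t - Y s) 2 μ := (hY2 t).sub (hY2 s)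
  have hmul : Integrable (Y s * (Y t - Y s)) μ := (hY2 s).integrable_mul hsub
  have hcond : μ[Y s * (Y t - Y s) | ℱ s] =ᵐ[μ] 0 := by
    have hinc : μ[Y t - Y s | ℱ s] =ᵐ[μ] Y s - Y s := by
      simpa only [condExp_of_stronglyMeasurable (ℱ.le s) (hY.stronglyMeasurable s)
        (hY.integrable s)] using (condExp_sub (hY.integrable t) (hY.integrable s) _).trans
          ((hY.condExp_ae_eq hst).sub .rfl)
    filter_upwards [condExp_mul_of_stronglyMeasurable_left (hY.stronglyMeasurable s) hmul
      (hsub.integrable one_le_two), hinc] with ω h₁ h₂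
    simp [h₁, h₂]
  have hcross : ∫ ω in A, Y s ω * (Y t ω - Y s ω) ∂μ = 0 := by
    have hA0 := setIntegral_condExp (ℱ.le s) hmul hA
    rw [setIntegral_congr_ae (ℱ.le s A hA) (hcond.mono fun ω hω _ => hω)] at hA0
    simpa using hA0.symm
  have hexpand (ω : Ω) : Y t ω ^ 2 - G t - (Y s ω ^ 2 - G s) =
      2 * (Y s ω * (Y t ω - Y s ω)) + (Y t ω - Y s ω) ^ 2 - (G t - G s) := by ring
  have hcross_int : Integrable (fun ω => 2 * (Y s ω * (Y t ω - Y s ω))) (μ.restrict A) :=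
    (hmul.const_mul 2).integrableOn
  have hsq_int : Integrable (fun ω => (Y t ω - Y s ω) ^ 2) (μ.restrict A) :=
    hsub.integrable_sq.integrableOn
  simp only [hexpand]
  rw [integral_sub (hcross_int.fun_add hsq_int) (integrable_const _),
    integral_add hcross_int hsq_int, integral_const_mul, hcross, h hst hA]
  simp

end QuadraticVariation

namespace IsCenteredAdditive

variable {Ω : Type*} {mΩ : MeasurableSpace Ω} {μ : Measure Ω} [IsProbabilityMeasure μ]
  {X : ℝ≥0 → Ω → ℝ} {ℱ : Filtration ℝ≥0 mΩ} {κ : ℝ≥0 → ℕ → ℝ} {n : ℕ}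

omit [IsProbabilityMeasure μ] in
lemma stronglyAdapted_variationProc (hX : IsCenteredAdditive X ℱ μ) (hn : n ≠ 0) :
    StronglyAdapted ℱ (variationProc X n) := fun t => by
  refine Measurable.stronglyMeasurable ?_
  simp only [funext (variationProc_eq_jumpSum X hn t)]
  exact measurable_jumpSum (continuous_pow n) (zero_pow hn) zero_le
    (fun u hu => hX.measurable_of_le hu) hX.isCadlag

lemma hasAllMoments_variationProc (hX : IsCenteredAdditive X ℱ μ) (hn : 2 ≤ n) (t : ℝ≥0) :
    HasAllMoments (variationProc X n t) μ := by
  simpa only [funext (variationProc_eq_jumpSum X (by lia : n ≠ 0) t)] using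
    hX.hasAllMoments_jumpSum_pow zero_le hn

lemma ae_variationProc_sub (hX : IsCenteredAdditive X ℱ μ) (hn : 2 ≤ n) {s t : ℝ≥0}
    (hst : s ≤ t) :
    ∀ᵐ ω ∂μ, variationProc X n t ω - variationProc X n s ω = jumpSum (· ^ n) (X · ω) s t := by
  filter_upwards [hX.ae_summableJumps (zero_le (a := t)) hn] with ω hω
  rw [variationProc_eq_jumpSum X (by lia), variationProc_eq_jumpSum X (by lia), sub_eq_iff_eq_add',
    jumpSum_pow_add (by lia) zero_le hst hω]

lemma ae_variationProc_sub_sub (hX : IsCenteredAdditive X ℱ μ) (hn : 2 ≤ n) {s t : ℝ≥0}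
    (hst : s ≤ t) :
    ∀ᵐ ω ∂μ, variationProc X n t ω - κ t n - (variationProc X n s ω - κ s n) =
      jumpSum (· ^ n) (X · ω) s t - (κ t n - κ s n) := by
  filter_upwards [hX.ae_variationProc_sub hn hst] with ω hω
  rw [← hω]
  ring

lemma martingale_variationProc_sub (hX : IsCenteredAdditive X ℱ μ)
    (hκ : ∀ t, HasCumulants (X t) (κ t) μ) (hn : 3 ≤ n) :
    Martingale (fun t ω => variationProc X n t ω - κ t n) ℱ μ := by
  refine martingale_of_forall_setIntegral_sub_eq_zero
    (fun t => (hX.stronglyAdapted_variationProc (by lia) t).sub stronglyMeasurable_const)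
    (fun t => ((hX.hasAllMoments_variationProc (by lia) t).sub_const _).integrable)
    fun s t hst A hA => ?_
  obtain ⟨m, rfl⟩ : ∃ m, n = m + 1 := ⟨n - 1, by lia⟩
  rw [← hX.setIntegral_jumpSum_sub hκ hst (by lia : 2 ≤ m) hA]
  exact integral_congr_ae (ae_restrict_of_ae (hX.ae_variationProc_sub_sub (by lia : 2 ≤ m + 1) hst))

lemma setIntegral_variationProc_sub_sq (hX : IsCenteredAdditive X ℱ μ)
    (hκ : ∀ t, HasCumulants (X t) (κ t) μ) (hn : 3 ≤ n) {s t : ℝ≥0} (hst : s ≤ t) {A : Set Ω}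
    (hA : MeasurableSet[ℱ s] A) :
    ∫ ω in A, (variationProc X n t ω - κ t n - (variationProc X n s ω - κ s n)) ^ 2 ∂μ =
      μ.real A * (κ t (2 * n) - κ s (2 * n)) := by
  obtain ⟨m, rfl⟩ : ∃ m, n = m + 1 := ⟨n - 1, by lia⟩
  rw [← hX.setIntegral_jumpSum_sub_sq hκ hst (by lia : 2 ≤ m) hA]
  refine integral_congr_ae (ae_restrict_of_ae ?_)
  filter_upwards [hX.ae_variationProc_sub_sub (by lia : 2 ≤ m + 1) hst] with ω hω
  rw [hω]

end IsCenteredAdditive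

theorem teugels_predictable_quadratic_variation_general {Ω : Type*} {mΩ : MeasurableSpace Ω}
    {μ : Measure Ω} [IsProbabilityMeasure μ] {X : ℝ≥0 → Ω → ℝ} {ℱ : Filtration ℝ≥0 mΩ}
    (hX : IsCenteredAdditive X ℱ μ) {κ : ℝ≥0 → ℕ → ℝ} (hκ : ∀ t, HasCumulants (X t) (κ t) μ)
    {n : ℕ} (hn : 3 ≤ n) :
    Martingale (fun t ω => (variationProc X n t ω - κ t n) ^ 2 - κ t (2 * n)) ℱ μ :=
  martingale_sq_sub_of_setIntegral_sub_sq_eq (hX.martingale_variationProc_sub hκ hn)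
    (fun t => ((hX.hasAllMoments_variationProc (by lia) t).sub_const _).memLp_two)
    fun _ _ hst _ hA => hX.setIntegral_variationProc_sub_sq hκ hn hst hA

/-- For `n ≥ 3`, the predictable quadratic variation of the Teugels martingale
`Y^{(n)}_t = X^{(n)}_t - F_n(t)` is `⟨Y^{(n)}⟩_t = F_{2n}(t)`; equivalently, the process
`(Y^{(n)}_t)^2 - F_{2n}(t)` is a martingale with respect to the natural filtration of `X`. -/
theorem teugels_predictable_quadratic_variation
    {Ω : Type*} {mΩ : MeasurableSpace Ω} (μ : Measure Ω) [IsProbabilityMeasure μ]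
    (X : ℝ≥0 → Ω → ℝ) (hXmeas : ∀ t, StronglyMeasurable (X t))
    (hX0 : ∀ ω, X 0 ω = 0)
    (hindep : ∀ s t : ℝ≥0, s ≤ t →
      Indep (MeasurableSpace.comap (fun ω => X t ω - X s ω) (inferInstance : MeasurableSpace ℝ))
        (MeasureTheory.Filtration.natural X hXmeas s) μ)
    (hcontP : ∀ (t : ℝ≥0) (ε : ℝ), 0 < ε →
      Tendsto (fun s => μ {ω | ε ≤ |X s ω - X t ω|}) (𝓝 t) (𝓝 0))
    (hcadlag : ∀ ω, IsCadlag fun t => X t ω)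
    (hmom : ∀ (n : ℕ) (t : ℝ≥0), Integrable (fun ω => |X t ω| ^ n) μ)
    (hcent : ∀ t : ℝ≥0, ∫ ω, X t ω ∂μ = 0)
    (F : ℕ → ℝ≥0 → ℝ)
    (hF : ∀ n, 2 ≤ n → ∀ t : ℝ≥0,
      ∫ ω, X t ω ^ n ∂μ = kendall n fun k => if k = 1 then 0 else F k t)
    (n : ℕ) (hn : 3 ≤ n) :
    Martingale (fun t ω => (variationProc X n t ω - F n t) ^ 2 - F (2 * n) t)
      (MeasureTheory.Filtration.natural X hXmeas) μ := by
  have hX : IsCenteredAdditive X (Filtration.natural X hXmeas) μ :=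
    { stronglyAdapted := Filtration.stronglyAdapted_natural hXmeas
      indep_sub := hindep
      tendsto_measure := hcontP
      isCadlag := hcadlag
      hasAllMoments := fun t => .of_integrable_abs_pow (hXmeas t).aestronglyMeasurable (hmom · t)
      integral_eq_zero := hcent }
  have hκ (t : ℝ≥0) : HasCumulants (X t) (fun k => if k = 1 then 0 else F k t) μ :=
    hasCumulants_of_two_le (by simp) (hcent t) fun k hk => hF k hk t
  simpa [show n ≠ 1 by lia] using teugels_predictable_quadratic_variation_general hX hκ hn
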